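/- Every admissible map u with D(u) = 0 and ‖u‖ ≠ 0 satisfies E(u) ≥ 4π/(3H²). (Explicit positive lower bound for the depth d = inf{E(u) : D(u) = 0, ‖u‖ ≠ 0} of the potential well.) -/

import Mathlib

open MeasureTheory Real Filter

/-- x-partial derivative of a map `u : ℝ² → ℝ³`. -/
noncomputable def pderivX (u : ℝ × ℝ → Fin 3 → ℝ) (p : ℝ × ℝ) : Fin 3 → ℝ :=
  fderiv ℝ u p (1, 0)

/-- y-partial derivative of a map `u : ℝ² → ℝ³`. -/
noncomputable def pderivY (u : ℝ × ℝ → Fin 3 → ℝ) (p : ℝ × ℝ) : Fin 3 → ℝ :=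
  fderiv ℝ u p (0, 1)

/-- Euclidean dot product on `ℝ³`. -/
def dot3 (a b : Fin 3 → ℝ) : ℝ := ∑ i, a i * b i

/-- Squared Dirichlet norm `‖u‖² = ∫_Ω |∇u|²`. -/
noncomputable def dirEnergy (Ω : Set (ℝ × ℝ)) (u : ℝ × ℝ → Fin 3 → ℝ) : ℝ :=
  ∫ p in Ω, (dot3 (pderivX u p) (pderivX u p) + dot3 (pderivY u p) (pderivY u p))

/-- Dirichlet norm `‖u‖`. -/
noncomputable def dnorm (Ω : Set (ℝ × ℝ)) (u : ℝ × ℝ → Fin 3 → ℝ) : ℝ :=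
  Real.sqrt (dirEnergy Ω u)

/-- Volume functional `V(u) = ∫_Ω u · (u_x ∧ u_y)`. -/
noncomputable def vol (Ω : Set (ℝ × ℝ)) (u : ℝ × ℝ → Fin 3 → ℝ) : ℝ :=
  ∫ p in Ω, dot3 (u p) (crossProduct (pderivX u p) (pderivY u p))

/-- An admissible map: smooth with compact support contained in `Ω`. -/
def IsAdmissible (Ω : Set (ℝ × ℝ)) (u : ℝ × ℝ → Fin 3 → ℝ) : Prop :=
  ContDiff ℝ (⊤ : ℕ∞) u ∧ HasCompactSupport u ∧ tsupport u ⊆ Ω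

/-- Energy functional `E(u) = (1/2)‖u‖² + (2H/3)·V(u)`. -/
noncomputable def Efun (Ω : Set (ℝ × ℝ)) (H : ℝ) (u : ℝ × ℝ → Fin 3 → ℝ) : ℝ :=
  (1 / 2) * dirEnergy Ω u + (2 * H / 3) * vol Ω u

/-- Modified Nehari functional `D_δ(u) = δ‖u‖² + 2H·V(u)`; `D = D₁`. -/
noncomputable def Dfun (Ω : Set (ℝ × ℝ)) (H δ : ℝ) (u : ℝ × ℝ → Fin 3 → ℝ) : ℝ :=
  δ * dirEnergy Ω u + 2 * H * vol Ω u

/-- The radius `r(δ) = 2√(2π)·δ/H`. -/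
noncomputable def rPW (H δ : ℝ) : ℝ := 2 * Real.sqrt (2 * Real.pi) * δ / H

/-- The coefficient `a(δ) = 1/2 − δ/3`. -/
noncomputable def aPW (δ : ℝ) : ℝ := 1 / 2 - δ / 3

section Aux
open scoped ENNReal NNReal Topology Pointwise

open scoped ENNReal NNReal Topology

lemma bm_compact (K L : Set ℝ) (hK : IsCompact K) (hL : IsCompact L) (hK0 : K.Nonempty)
    (hL0 : L.Nonempty) (C : Set ℝ) (hC : ∀ a ∈ K, ∀ b ∈ L, a + b ∈ C) :
    volume K + volume L ≤ volume C := by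
  obtain ⟨a, haK, ha⟩ := hK.exists_isGreatest hK0
  obtain ⟨b, hbL, hb⟩ := hL.exists_isLeast hL0
  have h1 : volume K = volume ((fun x => x + b) '' K) := by
    rw [Set.image_add_right, measure_preimage_add_right]
  have h2 : volume L = volume ((fun x => a + x) '' L) := by
    rw [Set.image_add_left, measure_preimage_add]
  rw [h1, h2, ← measure_union₀']
  · apply measure_mono
    rintro x (⟨y, hy, rfl⟩ | ⟨y, hy, rfl⟩)
    · exact hC _ hy _ hbL
    · exact hC _ haK _ hy
  · exact (hK.image (by fun_prop)).measurableSet.nullMeasurableSet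
  · refine measure_mono_null (t := {a + b}) ?_ (by simp)
    rintro x ⟨⟨y, hy, rfl⟩, ⟨z, hz, hzz⟩⟩
    have := ha hy
    have := hb hz
    simp only at hzz
    simp only [Set.mem_singleton_iff]
    linarith

lemma bm_one (A B C : Set ℝ) (hA : MeasurableSet A) (hB : MeasurableSet B) (hA0 : A.Nonempty)
    (hB0 : B.Nonempty) (hC : ∀ a ∈ A, ∀ b ∈ B, a + b ∈ C) :
    volume A + volume B ≤ volume C := by
  obtain ⟨a, ha⟩ := hA0
  obtain ⟨b, hb⟩ := hB0
  rcases eq_or_ne (volume A) 0 with h0 | h0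
  · rw [h0, zero_add]
    calc volume B = volume ((fun x => a + x) '' B) := by
          rw [Set.image_add_left, measure_preimage_add]
      _ ≤ _ := measure_mono (by rintro _ ⟨y, hy, rfl⟩; exact hC _ ha _ hy)
  rcases eq_or_ne (volume B) 0 with h1 | h1
  · rw [h1, add_zero]
    calc volume A = volume ((fun x => x + b) '' A) := by
          rw [Set.image_add_right, measure_preimage_add_right]
      _ ≤ _ := measure_mono (by rintro _ ⟨y, hy, rfl⟩; exact hC _ hy _ hb)
  rw [hA.measure_eq_iSup_isCompact, hB.measure_eq_iSup_isCompact]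
  have key : ∀ K ⊆ A, IsCompact K → ∀ L ⊆ B, IsCompact L → volume K + volume L ≤ volume C := by
    intro K hKA hK L hLB hL
    calc volume K + volume L ≤ volume (K ∪ {a}) + volume (L ∪ {b}) := by
          gcongr <;> simp
      _ ≤ _ := by
        apply bm_compact
        · exact hK.union isCompact_singleton
        · exact hL.union isCompact_singleton
        · simp
        · simp
        · intro x hx y hy
          apply hC
          · rcases hx with hx | hx
            · exact hKA hx
            · rw [hx]; exact ha
          · rcases hy with hx | hx
            · exact hLB hx
            · rw [hx]; exact hb
  simp only [iSup_and', iSup_subtype']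
  have : Nonempty {i : Set ℝ // i ⊆ A ∧ IsCompact i} := ⟨⟨∅, by simp⟩⟩
  have : Nonempty {i : Set ℝ // i ⊆ B ∧ IsCompact i} := ⟨⟨∅, by simp⟩⟩
  rw [ENNReal.iSup_add]
  refine iSup_le fun K => ?_
  rw [ENNReal.add_iSup]
  refine iSup_le fun L => ?_
  exact key K.1 K.2.1 K.2.2 L.1 L.2.1 L.2.2

lemma amgm2 (l : ℝ) (hl0 : 0 < l) (hl1 : l < 1) (x y : ℝ≥0∞) :
    x ^ (1 - l) * y ^ l ≤ ENNReal.ofReal (1 - l) * x + ENNReal.ofReal l * y := by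
  have h1 : (0:ℝ) < 1 - l := by linarith
  rcases eq_or_ne x ∞ with rfl | hx
  · rw [ENNReal.mul_top (by simpa using h1)]; simp
  rcases eq_or_ne y ∞ with rfl | hy
  · rw [ENNReal.mul_top (by simpa using hl0)]; simp
  lift x to ℝ≥0 using hx
  lift y to ℝ≥0 using hy
  rw [ENNReal.ofReal, ENNReal.ofReal, ← ENNReal.coe_rpow_of_nonneg _ h1.le,
    ← ENNReal.coe_rpow_of_nonneg _ hl0.le]
  norm_cast
  have := NNReal.geom_mean_le_arith_mean2_weighted (1 - l).toNNReal l.toNNReal x y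
    (by rw [← Real.toNNReal_add h1.le hl0.le]; simp)
  simpa [Real.coe_toNNReal _ h1.le, Real.coe_toNNReal _ hl0.le] using this

lemma vol_smul_real (c : ℝ) (hc : 0 < c) (A : Set ℝ) :
    volume ((fun x => c * x) '' A) = ENNReal.ofReal c * volume A := by
  have := Measure.addHaar_smul (volume : Measure ℝ) c A
  simp only [Module.finrank_self, pow_one, abs_of_pos hc] at this
  exact this

/-- Normalised one-dimensional Prékopa–Leindler. -/
lemma pl_norm (l : ℝ) (hl0 : 0 < l) (hl1 : l < 1) (f g h : ℝ → ℝ)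
    (hf : Measurable f) (hg : Measurable g) (hh : Measurable h)
    (hf0 : ∀ x, 0 ≤ f x) (hg0 : ∀ x, 0 ≤ g x) (hh0 : ∀ x, 0 ≤ h x)
    (hf1 : ∀ x, f x ≤ 1) (hg1 : ∀ x, g x ≤ 1)
    (hf2 : ∀ t < 1, ∃ x, t < f x) (hg2 : ∀ t < 1, ∃ x, t < g x)
    (H : ∀ x y, f x ^ (1 - l) * g y ^ l ≤ h ((1 - l) * x + l * y)) :
    ENNReal.ofReal (1 - l) * (∫⁻ x, ENNReal.ofReal (f x))
      + ENNReal.ofReal l * (∫⁻ x, ENNReal.ofReal (g x)) ≤ ∫⁻ x, ENNReal.ofReal (h x) := by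
  have h1 : (0:ℝ) < 1 - l := by linarith
  have lc : ∀ k : ℝ → ℝ, Measurable k → (∀ x, 0 ≤ k x) → (∀ x, k x ≤ 1) →
      ∫⁻ x, ENNReal.ofReal (k x) = ∫⁻ t in Set.Ioo 0 1, volume {a | t < k a} := by
    intro k hk hk0 hk1
    rw [lintegral_eq_lintegral_meas_lt _ (Eventually.of_forall hk0) hk.aemeasurable]
    rw [← Set.Ioo_union_Ici_eq_Ioi (zero_lt_one' ℝ), lintegral_union measurableSet_Ici]
    · rw [setLIntegral_congr_fun (g := fun _ => 0) measurableSet_Ici]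
      · simp
      · intro t ht
        have : {a | t < k a} = ∅ := by
          ext a
          simp only [Set.mem_ofPred_eq, Set.mem_empty_iff_false, iff_false, not_lt]
          exact (hk1 a).trans ht
        simp [this]
    · rw [Set.disjoint_left]; intro x hx hx2; exact absurd hx.2 (not_lt.2 hx2)
  rw [lc f hf hf0 hf1, lc g hg hg0 hg1,
    lintegral_eq_lintegral_meas_lt _ (Eventually.of_forall hh0) hh.aemeasurable]
  have meas : ∀ k : ℝ → ℝ, Measurable (fun t => volume {a | t < k a}) := by
    intro k
    apply Antitone.measurable
    intro s t hst
    exact measure_mono fun a (ha : t < k a) => lt_of_le_of_lt hst ha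
  rw [← lintegral_const_mul _ (meas f), ← lintegral_const_mul _ (meas g),
    ← lintegral_add_left ((meas f).const_mul _)]
  refine le_trans ?_ (lintegral_mono_set (Set.Ioo_subset_Ioi_self (a := 1)))
  apply setLIntegral_mono (meas h)
  intro t ht
  rw [← vol_smul_real _ h1, ← vol_smul_real _ hl0]
  apply bm_one
  · exact (measurableEmbedding_mulLeft₀ h1.ne').measurableSet_image' (measurableSet_lt measurable_const hf)
  · exact (measurableEmbedding_mulLeft₀ hl0.ne').measurableSet_image' (measurableSet_lt measurable_const hg)
  · exact Set.Nonempty.image _ (hf2 t ht.2)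
  · exact Set.Nonempty.image _ (hg2 t ht.2)
  · rintro _ ⟨x, hx, rfl⟩ _ ⟨y, hy, rfl⟩
    refine lt_of_lt_of_le ?_ (H x y)
    simp only [Set.mem_ofPred_eq] at hx hy
    calc t = t ^ (1 - l) * t ^ l := by
          rw [← Real.rpow_add ht.1]; simp
      _ < _ := by
        apply mul_lt_mul'' (Real.rpow_lt_rpow ht.1.le hx h1) (Real.rpow_lt_rpow ht.1.le hy hl0)
        · exact Real.rpow_nonneg ht.1.le _
        · exact Real.rpow_nonneg ht.1.le _

lemma pl_one (l : ℝ) (hl0 : 0 < l) (hl1 : l < 1) (f g h : ℝ → ℝ)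
    (hf : Measurable f) (hg : Measurable g) (hh : Measurable h)
    (hf0 : ∀ x, 0 ≤ f x) (hg0 : ∀ x, 0 ≤ g x) (hh0 : ∀ x, 0 ≤ h x)
    (hf1 : BddAbove (Set.range f)) (hg1 : BddAbove (Set.range g))
    (H : ∀ x y, f x ^ (1 - l) * g y ^ l ≤ h ((1 - l) * x + l * y)) :
    (∫⁻ x, ENNReal.ofReal (f x)) ^ (1 - l) * (∫⁻ x, ENNReal.ofReal (g x)) ^ l
     ≤ ∫⁻ x, ENNReal.ofReal (h x) := by
  have h1 : (0:ℝ) < 1 - l := by linarith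
  by_cases hfz : ∀ x, f x = 0
  · simp [hfz, ENNReal.zero_rpow_of_pos h1]
  by_cases hgz : ∀ x, g x = 0
  · simp [hgz, ENNReal.zero_rpow_of_pos hl0]
  push Not at hfz hgz
  set F := ⨆ x, f x with hF
  set G := ⨆ x, g x with hG
  have hFp : 0 < F := by
    obtain ⟨x, hx⟩ := hfz
    exact lt_of_lt_of_le (lt_of_le_of_ne (hf0 x) hx.symm) (le_ciSup hf1 x)
  have hGp : 0 < G := by
    obtain ⟨x, hx⟩ := hgz
    exact lt_of_lt_of_le (lt_of_le_of_ne (hg0 x) hx.symm) (le_ciSup hg1 x)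
  set Q := F ^ (1 - l) * G ^ l with hQ
  have hQp : 0 < Q := by positivity
  have key := pl_norm l hl0 hl1 (fun x => F⁻¹ * f x) (fun x => G⁻¹ * g x) (fun x => Q⁻¹ * h x)
    (hf.const_mul _) (hg.const_mul _) (hh.const_mul _)
    (fun x => mul_nonneg (by positivity) (hf0 x)) (fun x => mul_nonneg (by positivity) (hg0 x))
    (fun x => mul_nonneg (by positivity) (hh0 x))
    (fun x => by rw [inv_mul_le_iff₀ hFp, mul_one]; exact le_ciSup hf1 x)
    (fun x => by rw [inv_mul_le_iff₀ hGp, mul_one]; exact le_ciSup hg1 x)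
    (fun t ht => by
      obtain ⟨x, hx⟩ := exists_lt_of_lt_ciSup (show t * F < ⨆ x, f x by rw [← hF]; nlinarith)
      exact ⟨x, by rw [lt_inv_mul_iff₀ hFp]; linarith⟩)
    (fun t ht => by
      obtain ⟨x, hx⟩ := exists_lt_of_lt_ciSup (show t * G < ⨆ x, g x by rw [← hG]; nlinarith)
      exact ⟨x, by rw [lt_inv_mul_iff₀ hGp]; linarith⟩)
    (fun x y => by
      rw [Real.mul_rpow (by positivity) (hf0 x), Real.mul_rpow (by positivity) (hg0 y),
        Real.inv_rpow hFp.le, Real.inv_rpow hGp.le]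
      calc _ = Q⁻¹ * (f x ^ (1 - l) * g y ^ l) := by rw [hQ, mul_inv]; ring
        _ ≤ _ := by gcongr; exact H x y)
  have key2 := (amgm2 l hl0 hl1 _ _).trans key
  have e : ∀ (c : ℝ) (k : ℝ → ℝ), 0 < c → Measurable k → ∫⁻ x, ENNReal.ofReal (c⁻¹ * k x)
      = ENNReal.ofReal c⁻¹ * ∫⁻ x, ENNReal.ofReal (k x) := by
    intro c k hc hk
    rw [← lintegral_const_mul _ (hk.ennreal_ofReal)]
    congr; ext x
    rw [ENNReal.ofReal_mul (by positivity)]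
  rw [e F f hFp hf, e G g hGp hg, e Q h hQp hh, ENNReal.mul_rpow_of_nonneg _ _ h1.le,
    ENNReal.mul_rpow_of_nonneg _ _ hl0.le, ENNReal.ofReal_rpow_of_pos (by positivity),
    ENNReal.ofReal_rpow_of_pos (by positivity)] at key2
  have e2 : ENNReal.ofReal (F⁻¹ ^ (1 - l)) * ENNReal.ofReal (G⁻¹ ^ l) = ENNReal.ofReal Q⁻¹ := by
    rw [← ENNReal.ofReal_mul (by positivity), hQ, mul_inv, Real.inv_rpow hFp.le,
      Real.inv_rpow hGp.le]
  rw [mul_mul_mul_comm, e2] at key2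
  rwa [ENNReal.mul_le_mul_iff_right (by simpa using hQp) ENNReal.ofReal_ne_top] at key2

lemma vol_sections (n : ℕ) (A : Set (Fin (n+1) → ℝ)) (hA : MeasurableSet A) :
    volume A = ∫⁻ x : ℝ, volume {v : Fin n → ℝ | (Fin.cons x v : Fin (n+1) → ℝ) ∈ A} ∧
    Measurable (fun x : ℝ => volume {v : Fin n → ℝ | (Fin.cons x v : Fin (n+1) → ℝ) ∈ A}) := by
  have mp := (volume_preserving_piFinSuccAbove (fun _ : Fin (n+1) => ℝ) 0).symm
  have h1 := mp.measure_preimage hA.nullMeasurableSet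
  have hm : MeasurableSet ((MeasurableEquiv.piFinSuccAbove (fun _ : Fin (n+1) => ℝ) 0).symm ⁻¹' A) :=
    (MeasurableEquiv.measurable _) hA
  have e : ∀ x : ℝ, Prod.mk x ⁻¹' ((MeasurableEquiv.piFinSuccAbove (fun _ : Fin (n+1) => ℝ) 0).symm ⁻¹' A)
     = {v : Fin n → ℝ | (Fin.cons x v : Fin (n+1) → ℝ) ∈ A} := by
    intro x
    ext v
    simp [MeasurableEquiv.piFinSuccAbove, Fin.insertNthEquiv, Fin.insertNth_zero']
  constructor
  · rw [← h1, Measure.volume_eq_prod, Measure.prod_apply hm]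
    congr; ext x
    rw [← e x]
  · have := measurable_measure_prodMk_left (ν := (volume : Measure (Fin n → ℝ))) hm
    simp only [← e]
    exact this

lemma bm_mult (l : ℝ) (hl0 : 0 < l) (hl1 : l < 1) (n : ℕ) : ∀ A B C : Set (Fin n → ℝ),
    MeasurableSet A → MeasurableSet B → MeasurableSet C →
    Bornology.IsBounded A → Bornology.IsBounded B → Bornology.IsBounded C →
    (∀ a ∈ A, ∀ b ∈ B, (1 - l) • a + l • b ∈ C) →
    volume A ^ (1 - l) * volume B ^ l ≤ volume C := by
  have h1 : (0:ℝ) < 1 - l := by linarith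
  induction n with
  | zero =>
    intro A B C hA hB hC _ _ _ H
    rcases A.eq_empty_or_nonempty with rfl | ⟨a, ha⟩
    · simp [ENNReal.zero_rpow_of_pos h1]
    rcases B.eq_empty_or_nonempty with rfl | ⟨b, hb⟩
    · simp [ENNReal.zero_rpow_of_pos hl0]
    have hc := H a ha b hb
    have e : ∀ (S : Set (Fin 0 → ℝ)) (s : Fin 0 → ℝ), s ∈ S → volume S = 1 := by
      intro S s hs
      have : S = Set.univ := by
        ext x; simp [Subsingleton.elim x s, hs]
      rw [this, Measure.volume_pi_eq_dirac 0]; simp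
    rw [e A a ha, e B b hb, e C _ hc]; simp
  | succ n ih =>
    intro A B C hA hB hC bA bB bC H
    obtain ⟨eA, mA⟩ := vol_sections n A hA
    obtain ⟨eB, mB⟩ := vol_sections n B hB
    obtain ⟨eC, mC⟩ := vol_sections n C hC
    have bdd : ∀ S : Set (Fin (n+1) → ℝ), Bornology.IsBounded S → ∃ R : ℝ, ∀ x : ℝ,
        {v : Fin n → ℝ | (Fin.cons x v : Fin (n+1) → ℝ) ∈ S} ⊆ Metric.closedBall 0 R := by
      intro S hS
      obtain ⟨R, hR⟩ := hS.subset_closedBall 0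
      refine ⟨R, fun x v hv => ?_⟩
      have := hR hv
      simp only [mem_closedBall_zero_iff] at this ⊢
      have hR0 : 0 ≤ R := (norm_nonneg _).trans this
      rw [pi_norm_le_iff_of_nonneg hR0] at this ⊢
      intro i
      simpa using this i.succ
    have meas : ∀ S : Set (Fin (n+1) → ℝ), MeasurableSet S → ∀ x : ℝ,
        MeasurableSet {v : Fin n → ℝ | (Fin.cons x v : Fin (n+1) → ℝ) ∈ S} := by
      intro S hS x
      have : Measurable (fun v : Fin n → ℝ => (Fin.cons x v : Fin (n+1) → ℝ)) := by
        refine measurable_pi_iff.2 fun i => ?_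
        refine Fin.cases ?_ (fun j => ?_) i
        · simp
        · simpa using measurable_pi_apply j
      exact this hS
    have fin : ∀ S : Set (Fin (n+1) → ℝ), Bornology.IsBounded S → ∀ x : ℝ,
        volume {v : Fin n → ℝ | (Fin.cons x v : Fin (n+1) → ℝ) ∈ S} ≠ ∞ := by
      intro S hS x
      obtain ⟨R, hR⟩ := bdd S hS
      exact ((measure_mono (hR x)).trans_lt (measure_closedBall_lt_top)).ne
    have bdd2 : ∀ S : Set (Fin (n+1) → ℝ), Bornology.IsBounded S →
        BddAbove (Set.range fun x : ℝ =>
          (volume {v : Fin n → ℝ | (Fin.cons x v : Fin (n+1) → ℝ) ∈ S}).toReal) := by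
      intro S hS
      obtain ⟨R, hR⟩ := bdd S hS
      refine ⟨(volume (Metric.closedBall (0 : Fin n → ℝ) R)).toReal, ?_⟩
      rintro _ ⟨x, rfl⟩
      exact ENNReal.toReal_mono (measure_closedBall_lt_top).ne (measure_mono (hR x))
    have key := pl_one l hl0 hl1 _ _ _ mA.ennreal_toReal mB.ennreal_toReal mC.ennreal_toReal
      (fun _ => ENNReal.toReal_nonneg) (fun _ => ENNReal.toReal_nonneg)
      (fun _ => ENNReal.toReal_nonneg) (bdd2 A bA) (bdd2 B bB) (by
        intro x y
        rw [ENNReal.toReal_rpow, ENNReal.toReal_rpow, ← ENNReal.toReal_mul]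
        apply ENNReal.toReal_mono (fin C bC _)
        apply ih _ _ _ (meas A hA x) (meas B hB y) (meas C hC _)
        · exact Metric.isBounded_closedBall.subset ((bdd A bA).choose_spec x)
        · exact Metric.isBounded_closedBall.subset ((bdd B bB).choose_spec y)
        · exact Metric.isBounded_closedBall.subset ((bdd C bC).choose_spec _)
        · intro a ha b hb
          have := H _ ha _ hb
          simp only [Set.mem_ofPred_eq]
          convert this using 1
          ext i
          refine Fin.cases ?_ (fun j => ?_) i <;> simp)
    simp only [ENNReal.ofReal_toReal (fin A bA _), ENNReal.ofReal_toReal (fin B bB _),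
      ENNReal.ofReal_toReal (fin C bC _)] at key
    rwa [eA, eB, eC]

/-- Brunn–Minkowski in `ℝ³` -/
lemma bm_three (A B C : Set (Fin 3 → ℝ))
    (hA : MeasurableSet A) (hB : MeasurableSet B) (hC : MeasurableSet C)
    (bA : Bornology.IsBounded A) (bB : Bornology.IsBounded B) (bC : Bornology.IsBounded C)
    (a b : ℝ) (ha : 0 < a) (hb : 0 < b) (va : volume A = ENNReal.ofReal (a ^ 3))
    (vb : volume B = ENNReal.ofReal (b ^ 3))
    (H : ∀ x ∈ A, ∀ y ∈ B, x + y ∈ C) : ENNReal.ofReal ((a + b) ^ 3) ≤ volume C := by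
  have hab : 0 < a + b := by positivity
  set l := b / (a + b) with hl
  have hl0 : 0 < l := by positivity
  have h1 : 1 - l = a / (a + b) := by rw [hl]; field_simp; ring
  have h10 : 0 < 1 - l := by rw [h1]; positivity
  have smA : ∀ c : ℝ, 0 < c → ∀ S : Set (Fin 3 → ℝ), MeasurableSet S → MeasurableSet (c • S) :=
    fun c hc S hS => hS.const_smul_of_ne_zero hc.ne'
  have key := bm_mult l hl0 (by linarith) 3 ((1 - l)⁻¹ • A) (l⁻¹ • B) C
    (smA _ (by positivity) _ hA) (smA _ (by positivity) _ hB) hC (bA.smul₀ _) (bB.smul₀ _) bC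
    (by
      rintro _ ⟨x, hx, rfl⟩ _ ⟨y, hy, rfl⟩
      simp only [smul_smul]
      rw [mul_inv_cancel₀ h10.ne', mul_inv_cancel₀ hl0.ne', one_smul, one_smul]
      exact H x hx y hy)
  have e1 : ENNReal.ofReal |(1 - l)⁻¹ ^ 3| * volume A = ENNReal.ofReal ((a + b) ^ 3) := by
    rw [va, ← ENNReal.ofReal_mul (by positivity), abs_of_nonneg (by positivity), h1]
    congr 1; field_simp
  have e2 : ENNReal.ofReal |l⁻¹ ^ 3| * volume B = ENNReal.ofReal ((a + b) ^ 3) := by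
    rw [vb, ← ENNReal.ofReal_mul (by positivity), abs_of_nonneg (by positivity), hl]
    congr 1; field_simp
  rw [Measure.addHaar_smul, Measure.addHaar_smul] at key
  simp only [Module.finrank_fintype_fun_eq_card, Fintype.card_fin] at key
  rw [e1, e2, ← ENNReal.rpow_add _ _ (ENNReal.ofReal_pos.2 (by positivity)).ne' ENNReal.ofReal_ne_top] at key
  simpa using key

lemma dot3_self_nonneg (b : Fin 3 → ℝ) : 0 ≤ dot3 b b :=
  Finset.sum_nonneg fun i _ => mul_self_nonneg _

lemma norm_le_sqrt_dot3 (b : Fin 3 → ℝ) : ‖b‖ ≤ √(dot3 b b) := by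
  rw [pi_norm_le_iff_of_nonneg (Real.sqrt_nonneg _)]
  intro i
  apply Real.abs_le_sqrt
  rw [sq]
  exact Finset.single_le_sum (f := fun i => b i * b i) (fun i _ => mul_self_nonneg _)
    (Finset.mem_univ i)

lemma continuous_dot3_self : Continuous (fun b : Fin 3 → ℝ => dot3 b b) := by
  unfold dot3; fun_prop

noncomputable def cball : ℝ := (4 * π / 3) ^ ((1:ℝ)/3)

lemma cball_pos : 0 < cball := by unfold cball; positivity

lemma cball_pow : cball ^ 3 = 4 * π / 3 := by
  unfold cball
  rw [← Real.rpow_natCast, ← Real.rpow_mul (by positivity)]; norm_num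

lemma vol_eball (h : ℝ) (hh : 0 < h) :
    volume {b : Fin 3 → ℝ | dot3 b b < h ^ 2} = ENNReal.ofReal ((h * cball) ^ 3) := by
  have mp := PiLp.volume_preserving_ofLp (Fin 3)
  have hm : MeasurableSet {b : Fin 3 → ℝ | dot3 b b < h ^ 2} :=
    measurableSet_lt continuous_dot3_self.measurable measurable_const
  rw [← mp.measure_preimage hm.nullMeasurableSet]
  have : (@WithLp.ofLp 2 (Fin 3 → ℝ)) ⁻¹' {b : Fin 3 → ℝ | dot3 b b < h ^ 2} = Metric.ball 0 h := by
    ext b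
    rw [EuclideanSpace.ball_zero_eq _ hh.le]
    simp [dot3, sq]
  rw [this, EuclideanSpace.volume_ball_fin_three, ← ENNReal.ofReal_pow hh.le,
    ← ENNReal.ofReal_mul (by positivity), mul_pow, cball_pow]
  congr 1; ring

lemma bm_ball (A C : Set (Fin 3 → ℝ)) (hA : MeasurableSet A) (hC : MeasurableSet C)
    (bA : Bornology.IsBounded A) (bC : Bornology.IsBounded C) (h : ℝ) (hh : 0 < h)
    (H : ∀ x ∈ A, ∀ b : Fin 3 → ℝ, dot3 b b < h ^ 2 → x + b ∈ C) :
    volume A + ENNReal.ofReal (3 * h * cball) * volume A ^ ((2:ℝ)/3) ≤ volume C := by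
  rcases eq_or_ne (volume A) 0 with h0 | h0
  · simp [h0]
  have hfin : volume A ≠ ∞ := bA.measure_lt_top.ne
  set v := (volume A).toReal with hv
  have hvp : 0 < v := ENNReal.toReal_pos h0 hfin
  have hvA : volume A = ENNReal.ofReal v := (ENNReal.ofReal_toReal hfin).symm
  set a := v ^ ((1:ℝ)/3) with ha
  have hap : 0 < a := by positivity
  have ha3 : a ^ 3 = v := by
    rw [ha, ← Real.rpow_natCast, ← Real.rpow_mul hvp.le]; norm_num
  have ha2 : v ^ ((2:ℝ)/3) = a ^ 2 := by
    rw [ha, ← Real.rpow_natCast, ← Real.rpow_mul hvp.le]; norm_num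
  have hc := cball_pos
  have key := bm_three A {b : Fin 3 → ℝ | dot3 b b < h ^ 2} C hA
    (measurableSet_lt continuous_dot3_self.measurable measurable_const) hC bA (by
      refine (Metric.isBounded_closedBall (x := 0) (r := h)).subset ?_
      intro b hb
      rw [mem_closedBall_zero_iff]
      refine (norm_le_sqrt_dot3 b).trans ?_
      rw [Real.sqrt_le_left hh.le]
      exact le_of_lt hb) bC a (h * cball) hap (by positivity) (by rw [ha3, hvA])
    (vol_eball h hh) (fun x hx y hy => H x hx y hy)
  refine le_trans ?_ key
  rw [hvA, ENNReal.ofReal_rpow_of_pos hvp, ha2, ← ENNReal.ofReal_mul (by positivity),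
    ← ENNReal.ofReal_add hvp.le (by positivity)]
  apply ENNReal.ofReal_le_ofReal
  rw [← ha3]
  have : (a + h * cball) ^ 3 = a ^ 3 + 3 * h * cball * a ^ 2 + 3 * a * (h * cball) ^ 2
    + (h * cball) ^ 3 := by ring
  rw [this]
  have : 0 ≤ 3 * a * (h * cball) ^ 2 + (h * cball) ^ 3 := by positivity
  linarith

/-- sharp level set Sobolev inequality -/
lemma sob (W : (Fin 3 → ℝ) → ℝ) (hW : ContDiff ℝ 1 W) (hc : HasCompactSupport W)
    (G : (Fin 3 → ℝ) → ℝ) (hG : Measurable G) (hG0 : ∀ x, 0 ≤ G x)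
    (hWG : ∀ q b, |fderiv ℝ W q b| ≤ G q * √(dot3 b b)) :
    ENNReal.ofReal (3 * cball) * ∫⁻ t in Set.Ioi (0:ℝ), volume {x | t < |W x|} ^ ((2:ℝ)/3)
      ≤ ∫⁻ x, ENNReal.ofReal (G x) := by
  have hcb := cball_pos
  obtain ⟨R, hR⟩ := hc.isBounded.subset_closedBall 0
  set K := Metric.closedBall (0 : Fin 3 → ℝ) (R + 1) with hK
  have hKm : MeasurableSet K := Metric.isClosed_closedBall.measurableSet
  have hKv : volume K ≠ ∞ := measure_closedBall_lt_top.ne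
  have mW : Measurable W := hW.continuous.measurable
  have hWK : ∀ x, x ∉ K → W x = 0 := by
    intro x hx
    by_contra h
    have := hR (subset_tsupport W h)
    apply hx
    rw [hK]
    exact Metric.closedBall_subset_closedBall (by linarith) this
  have hintg : ∫⁻ x, ENNReal.ofReal |W x| ≠ ∞ := by
    have := (hW.continuous.integrable_of_hasCompactSupport (μ := volume) hc).2
    rw [HasFiniteIntegral] at this
    simpa [Real.enorm_eq_ofReal_abs] using this.ne
  set I := ∫⁻ t in Set.Ioi (0:ℝ), volume {x | t < |W x|} ^ ((2:ℝ)/3) with hI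
  have main : ∀ η : ℝ, 0 < η → ENNReal.ofReal (3 * cball) * I
      ≤ (∫⁻ x, ENNReal.ofReal (G x)) + ENNReal.ofReal η * volume K := by
    intro η hη
    have huc : UniformContinuous (fderiv ℝ W) :=
      (hc.fderiv ℝ).uniformContinuous_of_continuous (hW.continuous_fderiv one_ne_zero)
    obtain ⟨δ, hδ, hd⟩ := Metric.uniformContinuous_iff.1 huc η hη
    set h := min (δ / 2) 1 with hh
    have hhp : 0 < h := by positivity
    have hhd : h < δ := lt_of_le_of_lt (min_le_left _ _) (by linarith)
    have hh1 : h ≤ 1 := min_le_right _ _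
    set k : (Fin 3 → ℝ) → ℝ := K.indicator (fun x => |W x| + h * (G x + η)) with hk
    have hkm : Measurable k := by
      apply Measurable.indicator _ hKm
      exact (mW.abs).add ((hG.add_const _).const_mul _)
    have hk0 : ∀ x, 0 ≤ k x := by
      intro x
      apply Set.indicator_nonneg
      intro x _
      have := hG0 x
      positivity
    have mv : ∀ x b : Fin 3 → ℝ, dot3 b b < h ^ 2 → |W x| ≤ |W (x + b)| + h * (G (x + b) + η) := by
      intro x b hb
      have hsb : √(dot3 b b) ≤ h := by
        rw [Real.sqrt_le_left hhp.le]; exact hb.le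
      have hnb : ‖b‖ ≤ h := (norm_le_sqrt_dot3 b).trans hsb
      have := (convex_ball (x + b) δ).norm_image_sub_le_of_norm_fderiv_le' (𝕜 := ℝ) (f := W)
        (φ := fderiv ℝ W (x + b)) (C := η) (x := x + b) (y := x)
        (fun z _ => (hW.differentiable one_ne_zero) z) (fun z hz => by
          rw [← dist_eq_norm]; exact (hd hz).le) (Metric.mem_ball_self hδ) (by
          rw [Metric.mem_ball, dist_eq_norm]; simpa using lt_of_le_of_lt hnb hhd)
      have e : x - (x + b) = -b := by abel
      rw [e, norm_neg, map_neg, Real.norm_eq_abs] at this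
      have h2 := hWG (x + b) b
      have h3 : G (x+b) * √(dot3 b b) ≤ G (x+b) * h := by gcongr; exact hG0 _
      have h4 : η * ‖b‖ ≤ η * h := by gcongr
      have h5 : |W x| ≤ |W (x+b)| + |fderiv ℝ W (x+b) b| + |W x - W (x+b) - -(fderiv ℝ W (x+b) b)| := by
        have e1 : W x = W (x+b) + (-(fderiv ℝ W (x+b) b)) + (W x - W (x+b) - -(fderiv ℝ W (x+b) b)) := by ring
        calc |W x| = _ := congrArg _ e1
          _ ≤ _ := by
            refine (abs_add_le _ _).trans ?_
            gcongr
            refine (abs_add_le _ _).trans ?_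
            rw [abs_neg]
      nlinarith
    have lev : ∀ t ∈ Set.Ioi (0:ℝ), volume {x | t < |W x|} +
        ENNReal.ofReal (3 * h * cball) * volume {x | t < |W x|} ^ ((2:ℝ)/3) ≤ volume {x | t < k x} := by
      intro t ht
      apply bm_ball _ _ (measurableSet_lt measurable_const mW.abs) (measurableSet_lt measurable_const hkm)
        _ _ h hhp
      · intro x hx b hb
        have hxR : x ∈ Metric.closedBall 0 R := by
          apply hR
          apply subset_tsupport
          intro h0
          simp only [Set.mem_ofPred_eq, h0, abs_zero] at hx
          exact absurd hx (not_lt.2 (le_of_lt ht))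
        have hsb : √(dot3 b b) ≤ h := by
          rw [Real.sqrt_le_left hhp.le]; exact hb.le
        have hnb : ‖b‖ ≤ h := (norm_le_sqrt_dot3 b).trans hsb
        have hxK : x + b ∈ K := by
          rw [hK, mem_closedBall_zero_iff]
          rw [mem_closedBall_zero_iff] at hxR
          exact (norm_add_le _ _).trans (by linarith)
        simp only [Set.mem_ofPred_eq, hk, Set.indicator_of_mem hxK]
        exact lt_of_lt_of_le hx (mv x b hb)
      · refine (Metric.isBounded_closedBall (x := 0) (r := R+1)).subset ?_
        intro x hx
        by_contra hxK
        simp only [Set.mem_ofPred_eq, hWK x hxK, abs_zero] at hx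
        exact absurd hx (not_lt.2 (le_of_lt ht))
      · refine (Metric.isBounded_closedBall (x := 0) (r := R+1)).subset ?_
        intro x hx
        by_contra hxK
        simp only [Set.mem_ofPred_eq, hk, Set.indicator_of_notMem (show x ∉ K from hxK)] at hx
        exact absurd hx (not_lt.2 (le_of_lt ht))
    have anti : Antitone (fun t : ℝ => volume {x | t < |W x|}) := by
      intro s t hst
      exact measure_mono fun a (ha : t < _) => lt_of_le_of_lt hst ha
    have int := setLIntegral_mono' (μ := volume) measurableSet_Ioi lev
    rw [lintegral_add_left anti.measurable, lintegral_const_mul _ (anti.measurable.pow_const _), ← hI,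
      ← lintegral_eq_lintegral_meas_lt _ (Eventually.of_forall fun _ => abs_nonneg _) mW.abs.aemeasurable,
      ← lintegral_eq_lintegral_meas_lt _ (Eventually.of_forall hk0) hkm.aemeasurable] at int
    have hkle : ∫⁻ x, ENNReal.ofReal (k x) ≤ (∫⁻ x, ENNReal.ofReal |W x|) +
        ENNReal.ofReal h * ((∫⁻ x, ENNReal.ofReal (G x)) + ENNReal.ofReal η * volume K) := by
      have e1 : ENNReal.ofReal η * volume K = ∫⁻ x, K.indicator (fun _ => ENNReal.ofReal η) x := by
        rw [lintegral_indicator hKm]; simp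
      rw [e1, ← lintegral_add_left hG.ennreal_ofReal, ← lintegral_const_mul, ← lintegral_add_left mW.abs.ennreal_ofReal]
      · apply lintegral_mono
        intro x
        by_cases hx : x ∈ K
        · simp only [hk, Set.indicator_of_mem hx]
          rw [← ENNReal.ofReal_add (hG0 x) hη.le, ← ENNReal.ofReal_mul hhp.le,
            ← ENNReal.ofReal_add (abs_nonneg _) (by have := hG0 x; positivity)]
        · simp [hk, Set.indicator_of_notMem hx]
      · exact hG.ennreal_ofReal.add (measurable_const.indicator hKm)
    have int2 := int.trans hkle
    rw [ENNReal.add_le_add_iff_left hintg, show 3 * h * cball = h * (3 * cball) by ring,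
      ENNReal.ofReal_mul hhp.le, mul_assoc,
      ENNReal.mul_le_mul_iff_right (by simpa using hhp) ENNReal.ofReal_ne_top] at int2
    exact int2
  apply ENNReal.le_of_forall_pos_le_add
  intro ε hε _
  have hM : 0 ≤ (volume K).toReal := ENNReal.toReal_nonneg
  refine (main (ε / ((volume K).toReal + 1)) (by positivity)).trans ?_
  gcongr
  rw [← ENNReal.ofReal_toReal hKv, ← ENNReal.ofReal_mul (by positivity),
    ENNReal.toReal_ofReal hM, ← ENNReal.ofReal_coe_nnreal]
  apply ENNReal.ofReal_le_ofReal
  rw [div_mul_eq_mul_div, div_le_iff₀ (by positivity)]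
  have : (0:ℝ) ≤ ε := ε.2
  nlinarith

lemma loc_inj (Φ : (Fin 3 → ℝ) → (Fin 3 → ℝ)) (hΦ : ContDiff ℝ 1 Φ) (z : Fin 3 → ℝ)
    (hz : (fderiv ℝ Φ z).det ≠ 0) : ∃ V : Set (Fin 3 → ℝ), IsOpen V ∧ z ∈ V ∧ Set.InjOn Φ V := by
  have h1 : HasStrictFDerivAt Φ (fderiv ℝ Φ z) z := hΦ.contDiffAt.hasStrictFDerivAt one_ne_zero
  have h2 : HasStrictFDerivAt Φ
    (((fderiv ℝ Φ z).toContinuousLinearEquivOfDetNeZero hz : (Fin 3 → ℝ) ≃L[ℝ] (Fin 3 → ℝ)) :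
      (Fin 3 → ℝ) →L[ℝ] (Fin 3 → ℝ)) z := by
    simpa using h1
  refine ⟨(h2.toOpenPartialHomeomorph Φ).source, (h2.toOpenPartialHomeomorph Φ).open_source,
    h2.mem_toOpenPartialHomeomorph_source, ?_⟩
  have := (h2.toOpenPartialHomeomorph Φ).injOn
  simpa using this

lemma count_nat (s : ℕ → Set (Fin 3 → ℝ)) (x : Fin 3 → ℝ) :
    ∃ k : ℕ, (∑' n, (s n).indicator (fun _ => (1:ℝ≥0∞)) x).toReal = k := by
  by_cases h : ∑' n, (s n).indicator (fun _ => (1:ℝ≥0∞)) x = ∞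
  · exact ⟨0, by simp [h]⟩
  · have hf := ENNReal.finite_const_le_of_tsum_ne_top h one_ne_zero
    rw [tsum_eq_sum (s := hf.toFinset)]
    · classical
      refine ⟨∑ n ∈ hf.toFinset, if x ∈ s n then 1 else 0, ?_⟩
      rw [ENNReal.toReal_sum]
      · push_cast
        apply Finset.sum_congr rfl
        intro n _
        by_cases hx : x ∈ s n <;> simp [hx]
      · intro n _
        by_cases hx : x ∈ s n <;> simp [hx]
    · intro n hn
      by_cases hx : x ∈ s n <;> simp_all

lemma deg_pos (Φ : (Fin 3 → ℝ) → (Fin 3 → ℝ)) (hΦ : ContDiff ℝ 1 Φ) (S : Set (Fin 3 → ℝ))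
    (hS : MeasurableSet S) (hdet : ∀ z ∈ S, (fderiv ℝ Φ z).det ≠ 0) :
    ∃ N : (Fin 3 → ℝ) → ℝ≥0∞, Measurable N ∧ (∀ x, ∃ k : ℕ, (N x).toReal = k) ∧
      volume.withDensity N = Measure.map Φ
        ((volume.restrict S).withDensity fun z => ENNReal.ofReal |(fderiv ℝ Φ z).det|) := by
  have mdet : Measurable (fun z => ENNReal.ofReal |(fderiv ℝ Φ z).det|) := by
    have : Continuous (fun z => (fderiv ℝ Φ z).det) :=
      ContinuousLinearMap.continuous_det.comp (hΦ.continuous_fderiv one_ne_zero)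
    exact this.measurable.abs.ennreal_ofReal
  rcases S.eq_empty_or_nonempty with rfl | ⟨z0, hz0⟩
  · refine ⟨0, measurable_zero, fun x => ⟨0, by simp⟩, by simp⟩
  have : ∀ z, ∃ V : Set (Fin 3 → ℝ), z ∈ S → (IsOpen V ∧ z ∈ V ∧ Set.InjOn Φ V) := by
    intro z
    by_cases hz : z ∈ S
    · obtain ⟨V, hV⟩ := loc_inj Φ hΦ z (hdet z hz)
      exact ⟨V, fun _ => hV⟩
    · exact ⟨∅, fun h => absurd h hz⟩
  choose V hV using this
  obtain ⟨t, htS, htc, hcov⟩ := TopologicalSpace.countable_cover_nhdsWithin (f := V) (s := S)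
    (fun z hz => mem_nhdsWithin_of_mem_nhds ((hV z hz).1.mem_nhds (hV z hz).2.1))
  have htne : t.Nonempty := by
    obtain ⟨x, hx, _⟩ := Set.mem_iUnion₂.1 (hcov hz0)
    exact ⟨x, hx⟩
  obtain ⟨c, rfl⟩ := htc.exists_eq_range htne
  have hcS : ∀ n, c n ∈ S := fun n => htS ⟨n, rfl⟩
  set P : ℕ → Set (Fin 3 → ℝ) := fun n => S ∩ disjointed (fun n => V (c n)) n with hP
  have mP : ∀ n, MeasurableSet (P n) := fun n =>
    hS.inter (MeasurableSet.disjointed (fun n => (hV _ (hcS n)).1.measurableSet) n)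
  have iP : ∀ n, Set.InjOn Φ (P n) := fun n =>
    (hV _ (hcS n)).2.2.mono (Set.inter_subset_right.trans (disjointed_subset _ n))
  have uP : ⋃ n, P n = S := by
    rw [hP, ← Set.inter_iUnion, iUnion_disjointed, Set.inter_eq_left]
    intro z hz
    obtain ⟨x, ⟨n, rfl⟩, hx⟩ := Set.mem_iUnion₂.1 (hcov hz)
    exact Set.mem_iUnion.2 ⟨n, hx⟩
  have dP : Pairwise (Function.onFun Disjoint P) := by
    intro i j hij
    exact (disjoint_disjointed (fun n => V (c n)) hij).mono Set.inter_subset_right Set.inter_subset_right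
  have hd : ∀ n, ∀ x ∈ P n, HasFDerivWithinAt Φ (fderiv ℝ Φ x) (P n) x := fun n x _ =>
    ((hΦ.differentiable one_ne_zero) x).hasFDerivAt.hasFDerivWithinAt
  have mI : ∀ n, MeasurableSet (Φ '' P n) := fun n =>
    measurable_image_of_fderivWithin (mP n) (hd n) (iP n)
  refine ⟨fun x => ∑' n, (Φ '' P n).indicator (fun _ => (1:ℝ≥0∞)) x, ?_, ?_, ?_⟩
  · exact Measurable.ennreal_tsum fun n => measurable_const.indicator (mI n)
  · exact fun x => count_nat _ x
  · ext s hs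
    rw [withDensity_apply _ hs, Measure.map_apply hΦ.continuous.measurable hs,
      withDensity_apply _ (hΦ.continuous.measurable hs)]
    rw [lintegral_tsum (fun n => (measurable_const.indicator (mI n)).aemeasurable)]
    rw [Measure.restrict_restrict (hΦ.continuous.measurable hs), ← uP, Set.inter_iUnion,
      lintegral_iUnion]
    · congr; ext n
      rw [lintegral_indicator (mI n), Measure.restrict_restrict (mI n)]
      have := lintegral_image_eq_lintegral_abs_det_fderiv_mul volume (mP n) (hd n) (iP n)
        (s.indicator fun _ => 1)
      rw [lintegral_indicator hs, Measure.restrict_restrict hs] at this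
      rw [Set.inter_comm, this, ← Measure.restrict_restrict (hΦ.continuous.measurable hs),
        ← lintegral_indicator (hΦ.continuous.measurable hs)]
      congr; ext x
      by_cases hx : Φ x ∈ s
      · simp [hx]
      · simp [hx]
    · exact fun n => (hΦ.continuous.measurable hs).inter (mP n)
    · intro i j hij
      exact (dP hij).mono Set.inter_subset_right Set.inter_subset_right

lemma deg_pos' (Φ : (Fin 3 → ℝ) → (Fin 3 → ℝ)) (hΦ : ContDiff ℝ 1 Φ) (S : Set (Fin 3 → ℝ))
    (hS : MeasurableSet S) (hdet : ∀ z ∈ S, (fderiv ℝ Φ z).det ≠ 0)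
    (hintg : IntegrableOn (fun z => (fderiv ℝ Φ z).det) S) :
    ∃ w : (Fin 3 → ℝ) → ℝ, Integrable w ∧ (∀ x, ∃ k : ℤ, w x = k) ∧
      ∀ f : (Fin 3 → ℝ) → ℝ, Measurable f → 
        ∫ x, w x * f x = ∫ z in S, |(fderiv ℝ Φ z).det| * f (Φ z) := by
  obtain ⟨N, mN, hN, hmap⟩ := deg_pos Φ hΦ S hS hdet
  have mdet : Measurable (fun z => (fderiv ℝ Φ z).det) := by
    have : Continuous (fun z => (fderiv ℝ Φ z).det) :=
      ContinuousLinearMap.continuous_det.comp (hΦ.continuous_fderiv one_ne_zero)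
    exact this.measurable
  have hfin : ∫⁻ x, N x ≠ ∞ := by
    have h1 := congrArg (fun m => m Set.univ) hmap
    simp only [withDensity_apply _ MeasurableSet.univ, Measure.restrict_univ,
      Measure.map_apply hΦ.continuous.measurable MeasurableSet.univ, Set.preimage_univ] at h1
    rw [h1]
    have := hintg.2
    rw [HasFiniteIntegral] at this
    simpa [Real.enorm_eq_ofReal_abs] using this.ne
  have hae : ∀ᵐ x, N x < ∞ := ae_lt_top mN hfin
  refine ⟨fun x => (N x).toReal, ?_, ?_, ?_⟩
  · exact integrable_toReal_of_lintegral_ne_top mN.aemeasurable hfin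
  · intro x
    obtain ⟨k, hk⟩ := hN x
    exact ⟨k, by simp [hk]⟩
  · intro f hf
    have h1 := integral_withDensity_eq_integral_toReal_smul mN hae f
    rw [hmap, integral_map hΦ.continuous.measurable.aemeasurable hf.aestronglyMeasurable,
      integral_withDensity_eq_integral_toReal_smul mdet.abs.ennreal_ofReal
        (Eventually.of_forall fun _ => ENNReal.ofReal_lt_top)] at h1
    simp only [smul_eq_mul] at h1
    rw [← h1]
    simp only [ENNReal.toReal_ofReal (abs_nonneg _)]

lemma deg (Φ : (Fin 3 → ℝ) → (Fin 3 → ℝ)) (hΦ : ContDiff ℝ 1 Φ) (S : Set (Fin 3 → ℝ))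
    (hS : MeasurableSet S) 
    (hintg : IntegrableOn (fun z => (fderiv ℝ Φ z).det) S) :
    ∃ w : (Fin 3 → ℝ) → ℝ, Integrable w ∧ (∀ x, ∃ k : ℤ, w x = k) ∧
      ∀ f : (Fin 3 → ℝ) → ℝ, Measurable f → (∃ M, ∀ x, |f x| ≤ M) →
        ∫ x, w x * f x = ∫ z in S, (fderiv ℝ Φ z).det * f (Φ z) := by
  have mdet : Measurable (fun z => (fderiv ℝ Φ z).det) := by
    have : Continuous (fun z => (fderiv ℝ Φ z).det) :=
      ContinuousLinearMap.continuous_det.comp (hΦ.continuous_fderiv one_ne_zero)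
    exact this.measurable
  set Sp := S ∩ {z | 0 < (fderiv ℝ Φ z).det} with hSp
  set Sm := S ∩ {z | (fderiv ℝ Φ z).det < 0} with hSm
  have mSp : MeasurableSet Sp := hS.inter (measurableSet_lt measurable_const mdet)
  have mSm : MeasurableSet Sm := hS.inter (measurableSet_lt mdet measurable_const)
  obtain ⟨w1, i1, z1, f1⟩ := deg_pos' Φ hΦ Sp mSp (fun z hz => ne_of_gt hz.2) (hintg.mono_set Set.inter_subset_left)
  obtain ⟨w2, i2, z2, f2⟩ := deg_pos' Φ hΦ Sm mSm (fun z hz => ne_of_lt hz.2) (hintg.mono_set Set.inter_subset_left)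
  refine ⟨fun x => w1 x - w2 x, i1.sub i2, ?_, ?_⟩
  · intro x
    obtain ⟨k, hk⟩ := z1 x
    obtain ⟨l, hl⟩ := z2 x
    exact ⟨k - l, by push_cast; rw [hk, hl]⟩
  · rintro f hf ⟨M, hM⟩
    have b1 : ∀ w : (Fin 3 → ℝ) → ℝ, Integrable w → Integrable (fun x => w x * f x) := fun w hw =>
      hw.mul_bdd (c := M) hf.aestronglyMeasurable (Eventually.of_forall hM)
    simp only [sub_mul]
    rw [integral_sub (b1 _ i1) (b1 _ i2), f1 f hf, f2 f hf]
    have b2 : IntegrableOn (fun z => (fderiv ℝ Φ z).det * f (Φ z)) S := by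
      apply Integrable.mul_bdd (c := M) hintg
      · exact (hf.comp hΦ.continuous.measurable).aestronglyMeasurable
      · exact Eventually.of_forall fun z => hM _
    have b3 : IntegrableOn (fun z => |(fderiv ℝ Φ z).det| * f (Φ z)) S := by
      apply Integrable.mul_bdd (c := M) (Integrable.abs hintg)
      · exact (hf.comp hΦ.continuous.measurable).aestronglyMeasurable
      · exact Eventually.of_forall fun z => hM _
    rw [← integral_indicator mSp, ← integral_indicator mSm, ← integral_indicator hS, ← integral_sub]
    · congr; ext z
      by_cases hz : z ∈ S
      · rcases lt_trichotomy 0 (fderiv ℝ Φ z).det with h | h | h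
        · simp [hSp, hSm, Set.indicator, hz, h, abs_of_pos h, h.le]
        · simp [hSp, hSm, Set.indicator, hz, ← h]
        · simp [hSp, hSm, Set.indicator, hz, h, abs_of_neg h, h.le]
      · simp [hSp, hSm, Set.indicator, hz]
    · exact (b3.mono_set Set.inter_subset_left).integrable_indicator mSp
    · exact (b3.mono_set Set.inter_subset_left).integrable_indicator mSm

lemma int_fderiv_zero (F : ℝ × ℝ → ℝ) (hF : ContDiff ℝ 1 F) (hc : HasCompactSupport F) (v : ℝ × ℝ) :
    ∫ p, fderiv ℝ F p v = 0 := by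
  have hcont : Continuous (fun p => fderiv ℝ F p v) :=
    (hF.continuous_fderiv one_ne_zero).clm_apply continuous_const
  have h := integral_mul_fderiv_eq_neg_fderiv_mul_of_integrable (μ := (volume : Measure (ℝ × ℝ)))
    (f := fun _ => (1:ℝ)) (g := F) (v := v) (by simp) (by
      simpa using hcont.integrable_of_hasCompactSupport (hc.fderiv_apply ℝ v)) (by
      simpa using hF.continuous.integrable_of_hasCompactSupport hc)
      (by intro x _; fun_prop) (fun x _ => hF.differentiable one_ne_zero x)
  simpa using h

lemma clm_expand (L : (Fin 3 → ℝ) →L[ℝ] ℝ) (v : Fin 3 → ℝ) :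
    L v = v 0 * L (Pi.single 0 1) + v 1 * L (Pi.single 1 1) + v 2 * L (Pi.single 2 1) := by
  have := LinearMap.pi_apply_eq_sum_univ (L : (Fin 3 → ℝ) →ₗ[ℝ] ℝ) v
  rw [Fin.sum_univ_three] at this
  have e : ∀ i : Fin 3, (fun j : Fin 3 => if i = j then (1:ℝ) else 0) = Pi.single i 1 := by
    intro i; ext j; simp [Pi.single_apply, eq_comm]
  simpa [e] using this

lemma dot3_cross (u a c : Fin 3 → ℝ) : dot3 u (crossProduct a c) =
    u 0 * (a 1 * c 2 - a 2 * c 1) + u 1 * (a 2 * c 0 - a 0 * c 2) + u 2 * (a 0 * c 1 - a 1 * c 0) := by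
  simp [dot3, cross_apply, Fin.sum_univ_three]

lemma cramer3 (L : (Fin 3 → ℝ) →L[ℝ] ℝ) (u a b c : Fin 3 → ℝ) :
    L b * dot3 u (crossProduct a c) = L u * dot3 b (crossProduct a c)
     + L a * dot3 u (crossProduct b c) + L c * dot3 u (crossProduct a b) := by
  rw [clm_expand L u, clm_expand L a, clm_expand L b, clm_expand L c]
  simp only [dot3_cross]
  ring

lemma contDiff_px (u : ℝ × ℝ → Fin 3 → ℝ) (hu : ContDiff ℝ (⊤ : ℕ∞) u) : ContDiff ℝ (⊤ : ℕ∞) (pderivX u) :=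
  (hu.fderiv_right (m := (⊤ : ℕ∞)) le_rfl).clm_apply contDiff_const

lemma contDiff_py (u : ℝ × ℝ → Fin 3 → ℝ) (hu : ContDiff ℝ (⊤ : ℕ∞) u) : ContDiff ℝ (⊤ : ℕ∞) (pderivY u) :=
  (hu.fderiv_right (m := (⊤ : ℕ∞)) le_rfl).clm_apply contDiff_const

lemma sym_xy (u : ℝ × ℝ → Fin 3 → ℝ) (hu : ContDiff ℝ (⊤ : ℕ∞) u) (p : ℝ × ℝ) : fderiv ℝ (pderivX u) p (0, 1) = fderiv ℝ (pderivY u) p (1, 0) := by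
  have h2 : DifferentiableAt ℝ (fderiv ℝ u) p :=
    ((hu.fderiv_right (m := (⊤ : ℕ∞)) le_rfl).differentiable (by simp)) p
  have hs : IsSymmSndFDerivAt ℝ u p := hu.contDiffAt.isSymmSndFDerivAt (by
    rw [minSmoothness_of_isRCLikeNormedField]; exact WithTop.coe_le_coe.2 (le_top : (2:ℕ∞) ≤ ⊤))
  have e1 : ∀ v : ℝ × ℝ, HasFDerivAt (fun p => fderiv ℝ u p v)
      ((ContinuousLinearMap.apply ℝ (Fin 3 → ℝ) v).comp (fderiv ℝ (fderiv ℝ u) p)) p := fun v =>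
    (ContinuousLinearMap.apply ℝ (Fin 3 → ℝ) v).hasFDerivAt.comp p h2.hasFDerivAt
  have ex : fderiv ℝ (pderivX u) p = _ := (e1 (1,0)).fderiv
  have ey : fderiv ℝ (pderivY u) p = _ := (e1 (0,1)).fderiv
  rw [ex, ey]
  simpa using hs (0,1) (1,0)

lemma px_zero (u : ℝ × ℝ → Fin 3 → ℝ) (p : ℝ × ℝ) (hp : p ∉ tsupport u) : pderivX u p = 0 ∧ pderivY u p = 0 ∧ u p = 0 := by
  have : fderiv ℝ u p = 0 := by
    by_contra h
    exact hp (support_fderiv_subset ℝ h)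
  refine ⟨by simp [pderivX, this], by simp [pderivY, this], image_eq_zero_of_notMem_tsupport hp⟩

lemma cs_of_zero (u : ℝ × ℝ → Fin 3 → ℝ) (hc : HasCompactSupport u) (F : ℝ × ℝ → ℝ) (h : ∀ p, p ∉ tsupport u → F p = 0) : HasCompactSupport F :=
  HasCompactSupport.intro hc (fun p hp => h p hp)

/-- pointwise divergence identity -/
lemma div_pt (u : ℝ × ℝ → Fin 3 → ℝ) (hu : ContDiff ℝ (⊤ : ℕ∞) u) (ψ : (Fin 3 → ℝ) → ℝ) (hψ : ContDiff ℝ 1 ψ) (b : Fin 3 → ℝ) (t : ℝ) (p : ℝ × ℝ) :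
    (2 * t * ψ (t • u p) + t ^ 2 * fderiv ℝ ψ (t • u p) (u p)) *
        dot3 b (crossProduct (pderivX u p) (pderivY u p))
      - t ^ 2 * dot3 (u p) (crossProduct (pderivX u p) (pderivY u p)) * fderiv ℝ ψ (t • u p) b
    = - t * (fderiv ℝ (fun p => ψ (t • u p) * dot3 (u p) (crossProduct b (pderivY u p))) p (1, 0)
      + fderiv ℝ (fun p => ψ (t • u p) * dot3 (u p) (crossProduct (pderivX u p) b)) p (0, 1)) := by
  have du : HasFDerivAt u (fderiv ℝ u p) p := (hu.differentiable (by simp) p).hasFDerivAt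
  have dx : HasFDerivAt (pderivX u) (fderiv ℝ (pderivX u) p) p :=
    ((contDiff_px u hu).differentiable (by simp) p).hasFDerivAt
  have dy : HasFDerivAt (pderivY u) (fderiv ℝ (pderivY u) p) p :=
    ((contDiff_py u hu).differentiable (by simp) p).hasFDerivAt
  have hY : HasFDerivAt (fun p => ψ (t • u p)) ((fderiv ℝ ψ (t • u p)).comp (t • fderiv ℝ u p)) p :=
    HasFDerivAt.comp p ((hψ.differentiable one_ne_zero) _).hasFDerivAt (du.const_smul t)
  have hU := fun i => (hasFDerivAt_pi'.1 du i)
  have hX := fun i => (hasFDerivAt_pi'.1 dx i)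
  have hYy := fun i => (hasFDerivAt_pi'.1 dy i)
  have cr := cramer3 (fderiv ℝ ψ (t • u p)) (u p) (pderivX u p) b (pderivY u p)
  have hP := hY.fun_mul ((((hU 0).fun_mul (((hYy 2).const_mul (b 1)).fun_sub ((hYy 1).const_mul (b 2)))).fun_add
    ((hU 1).fun_mul (((hYy 0).const_mul (b 2)).fun_sub ((hYy 2).const_mul (b 0))))).fun_add
    ((hU 2).fun_mul (((hYy 1).const_mul (b 0)).fun_sub ((hYy 0).const_mul (b 1)))))
  have hQ := hY.fun_mul ((((hU 0).fun_mul (((hX 1).mul_const (b 2)).fun_sub ((hX 2).mul_const (b 1)))).fun_add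
    ((hU 1).fun_mul (((hX 2).mul_const (b 0)).fun_sub ((hX 0).mul_const (b 2))))).fun_add
    ((hU 2).fun_mul (((hX 0).mul_const (b 1)).fun_sub ((hX 1).mul_const (b 0)))))
  have eP : (fun p => ψ (t • u p) * dot3 (u p) (crossProduct b (pderivY u p))) = _ :=
    funext fun p => congrArg (fun z => ψ (t • u p) * z) (dot3_cross (u p) b (pderivY u p))
  have eQ : (fun p => ψ (t • u p) * dot3 (u p) (crossProduct (pderivX u p) b)) = _ :=
    funext fun p => congrArg (fun z => ψ (t • u p) * z) (dot3_cross (u p) (pderivX u p) b)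
  have fP := congrArg (fun M => M (1, 0)) (HasFDerivAt.fderiv hP)
  have fQ := congrArg (fun M => M (0, 1)) (HasFDerivAt.fderiv hQ)
  have sxy := sym_xy u hu p
  rw [eP, eQ]
  have gP : fderiv ℝ (fun p => ψ (t • u p) * _) p (1, 0) = _ := fP
  have gQ : fderiv ℝ (fun p => ψ (t • u p) * _) p (0, 1) = _ := fQ
  rw [gP, gQ]
  have ea : fderiv ℝ u p (1, 0) = pderivX u p := rfl
  have ec : fderiv ℝ u p (0, 1) = pderivY u p := rfl
  simp only [ContinuousLinearMap.add_apply, ContinuousLinearMap.smul_apply, ContinuousLinearMap.sub_apply,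
    ContinuousLinearMap.comp_apply, ContinuousLinearMap.coe_comp', Function.comp_apply, ContinuousLinearMap.proj_apply, smul_eq_mul, sxy, ea, ec, map_smul]
  simp only [dot3_cross] at cr ⊢
  linear_combination (-t^2) * cr

lemma div_int (u : ℝ × ℝ → Fin 3 → ℝ) (hu : ContDiff ℝ (⊤ : ℕ∞) u) (hc : HasCompactSupport u) (ψ : (Fin 3 → ℝ) → ℝ) (hψ : ContDiff ℝ 1 ψ) (b : Fin 3 → ℝ) (t : ℝ) :
    ∫ p, (2 * t * ψ (t • u p) + t ^ 2 * fderiv ℝ ψ (t • u p) (u p)) *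
        dot3 b (crossProduct (pderivX u p) (pderivY u p))
    = ∫ p, t ^ 2 * dot3 (u p) (crossProduct (pderivX u p) (pderivY u p)) * fderiv ℝ ψ (t • u p) b := by
  have cu : ContDiff ℝ 1 u := hu.of_le (by exact mod_cast le_top)
  have cx : ContDiff ℝ 1 (pderivX u) := (contDiff_px u hu).of_le (by exact mod_cast le_top)
  have cy : ContDiff ℝ 1 (pderivY u) := (contDiff_py u hu).of_le (by exact mod_cast le_top)
  have c0 := cu.continuous
  have c1 := cx.continuous
  have c2 := cy.continuous
  have cui := fun i => contDiff_pi.1 cu i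
  have cxi := fun i => contDiff_pi.1 cx i
  have cyi := fun i => contDiff_pi.1 cy i
  have cψ : ContDiff ℝ 1 (fun p => ψ (t • u p)) := hψ.comp (cu.const_smul t)
  have cd : Continuous (fun p => fderiv ℝ ψ (t • u p)) :=
    (hψ.continuous_fderiv one_ne_zero).comp (c0.const_smul t)
  rw [← sub_eq_zero, ← integral_sub]
  · simp only [div_pt u hu ψ hψ b t]
    rw [integral_const_mul, integral_add]
    · rw [int_fderiv_zero, int_fderiv_zero]
      · simp
      · simp only [dot3_cross]; fun_prop
      · apply cs_of_zero u hc; intro p hp; simp [px_zero u p hp, dot3]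
      · simp only [dot3_cross]; fun_prop
      · apply cs_of_zero u hc; intro p hp; simp [px_zero u p hp, dot3]
    · apply Continuous.integrable_of_hasCompactSupport
      · refine (ContDiff.continuous_fderiv (n := 1) ?_ one_ne_zero).clm_apply continuous_const
        simp only [dot3_cross]; fun_prop
      · apply HasCompactSupport.fderiv_apply
        apply cs_of_zero u hc; intro p hp; simp [px_zero u p hp, dot3]
    · apply Continuous.integrable_of_hasCompactSupport
      · refine (ContDiff.continuous_fderiv (n := 1) ?_ one_ne_zero).clm_apply continuous_const
        simp only [dot3_cross]; fun_prop
      · apply HasCompactSupport.fderiv_apply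
        apply cs_of_zero u hc; intro p hp; simp [px_zero u p hp, dot3]
  · apply Continuous.integrable_of_hasCompactSupport
    · simp only [dot3_cross]
      have := cψ.continuous
      fun_prop
    · apply cs_of_zero u hc; intro p hp; simp [px_zero u p hp, dot3]
  · apply Continuous.integrable_of_hasCompactSupport
    · simp only [dot3_cross]; fun_prop
    · apply cs_of_zero u hc; intro p hp; simp [px_zero u p hp, dot3]

lemma cont_int (u : ℝ × ℝ → Fin 3 → ℝ) (hc : HasCompactSupport u) (F : ℝ × (ℝ × ℝ) → ℝ) (hF : Continuous F) (h0 : ∀ t p, p ∉ tsupport u → F (t, p) = 0) :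
    IntegrableOn F (Set.Ioc 0 1 ×ˢ Set.univ) := by
  have h1 : IntegrableOn F (Set.Icc 0 1 ×ˢ tsupport u) :=
    hF.continuousOn.integrableOn_compact (isCompact_Icc.prod hc)
  have h2 : IntegrableOn F (Set.Icc 0 1 ×ˢ Set.univ) := by
    refine h1.of_forall_sdiff_eq_zero (measurableSet_Icc.prod MeasurableSet.univ) ?_
    rintro ⟨t, p⟩ ⟨⟨ht, _⟩, hn⟩
    exact h0 t p fun hp => hn ⟨ht, hp⟩
  exact h2.mono_set (Set.prod_mono Set.Ioc_subset_Icc_self le_rfl)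

lemma stokes (u : ℝ × ℝ → Fin 3 → ℝ) (hu : ContDiff ℝ (⊤ : ℕ∞) u) (hc : HasCompactSupport u) (ψ : (Fin 3 → ℝ) → ℝ) (hψ : ContDiff ℝ 1 ψ) (b : Fin 3 → ℝ) :
    ∫ z in Set.Ioc (0:ℝ) 1 ×ˢ (Set.univ : Set (ℝ × ℝ)), z.1 ^ 2 *
      dot3 (u z.2) (crossProduct (pderivX u z.2) (pderivY u z.2)) * fderiv ℝ ψ (z.1 • u z.2) b
    = ∫ p, ψ (u p) * dot3 b (crossProduct (pderivX u p) (pderivY u p)) := by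
  have c0 := hu.continuous
  have c1 := (contDiff_px u hu).continuous
  have c2 := (contDiff_py u hu).continuous
  have cψ := hψ.continuous
  have cdψ := hψ.continuous_fderiv one_ne_zero
  have cd : Continuous (fun z : ℝ × (ℝ × ℝ) => fderiv ℝ ψ (z.1 • u z.2)) :=
    cdψ.comp (by fun_prop)
  have iA := cont_int u hc (fun z => z.1 ^ 2 *
      dot3 (u z.2) (crossProduct (pderivX u z.2) (pderivY u z.2)) * fderiv ℝ ψ (z.1 • u z.2) b) (by
      simp only [dot3_cross]; fun_prop) (by intro t p hp; simp [px_zero u p hp, dot3])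
  have iB := cont_int u hc (fun z => (2 * z.1 * ψ (z.1 • u z.2) + z.1 ^ 2 * fderiv ℝ ψ (z.1 • u z.2) (u z.2)) *
        dot3 b (crossProduct (pderivX u z.2) (pderivY u z.2))) (by
      simp only [dot3_cross]; fun_prop) (by intro t p hp; simp [px_zero u p hp, dot3])
  rw [IntegrableOn, Measure.volume_eq_prod, ← Measure.prod_restrict, Measure.restrict_univ] at iA iB
  rw [Measure.volume_eq_prod, ← Measure.prod_restrict, Measure.restrict_univ, integral_prod _ iA]
  simp only [← div_int u hu hc ψ hψ b]
  rw [integral_integral_swap iB]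
  congr; ext p
  rw [integral_mul_const]
  congr 1
  rw [← intervalIntegral.integral_of_le zero_le_one]
  have hd : ∀ t : ℝ, HasDerivAt (fun t : ℝ => t ^ 2 * ψ (t • u p))
      (2 * t * ψ (t • u p) + t ^ 2 * fderiv ℝ ψ (t • u p) (u p)) t := by
    intro t
    have h1 : HasDerivAt (fun t : ℝ => t • u p) (u p) t := by
      simpa using (hasDerivAt_id t).smul_const (u p)
    have h2 := ((hψ.differentiable one_ne_zero) (t • u p)).hasFDerivAt.comp_hasDerivAt t h1
    have h3 := (hasDerivAt_pow 2 t).fun_mul h2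
    simpa using h3
  rw [intervalIntegral.integral_eq_sub_of_hasDerivAt (fun t _ => hd t)]
  · simp
  · apply Continuous.intervalIntegrable
    have : Continuous (fun t : ℝ => fderiv ℝ ψ (t • u p)) := cdψ.comp (by fun_prop)
    fun_prop

noncomputable def eqv3 : (Fin 3 → ℝ) ≃ᵐ ℝ × (ℝ × ℝ) :=
  (MeasurableEquiv.piFinSuccAbove (fun _ : Fin 3 => ℝ) 0).trans
    ((MeasurableEquiv.refl ℝ).prodCongr MeasurableEquiv.finTwoArrow)

lemma eqv3_apply (z : Fin 3 → ℝ) : eqv3 z = (z 0, (z 1, z 2)) := rfl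

lemma eqv3_mp : MeasurePreserving eqv3 := by
  have h1 := volume_preserving_piFinSuccAbove (fun _ : Fin 3 => ℝ) 0
  have h2 := (MeasurePreserving.id (volume : Measure ℝ)).prod (volume_preserving_finTwoArrow ℝ)
  exact h2.comp h1

noncomputable def coneMap (u : ℝ × ℝ → Fin 3 → ℝ) (z : Fin 3 → ℝ) : Fin 3 → ℝ :=
  z 0 • u (z 1, z 2)

lemma coneMap_contDiff (u : ℝ × ℝ → Fin 3 → ℝ) (hu : ContDiff ℝ 1 u) :
    ContDiff ℝ 1 (coneMap u) := by
  unfold coneMap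
  have h : ContDiff ℝ 1 (fun z : Fin 3 → ℝ => u (z 1, z 2)) := hu.comp (by fun_prop)
  have h0 : ContDiff ℝ 1 (fun z : Fin 3 → ℝ => z 0) := by fun_prop
  exact h0.smul h

lemma coneMap_det (u : ℝ × ℝ → Fin 3 → ℝ) (hu : ContDiff ℝ 1 u) (z : Fin 3 → ℝ) :
    (fderiv ℝ (coneMap u) z).det = (z 0) ^ 2 *
      dot3 (u (z 1, z 2)) (crossProduct (pderivX u (z 1, z 2)) (pderivY u (z 1, z 2))) := by
  have h0 : ∀ i : Fin 3, HasFDerivAt (fun z : Fin 3 → ℝ => z i)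
      (ContinuousLinearMap.proj (R := ℝ) (φ := fun _ : Fin 3 => ℝ) i) z := fun i =>
    (ContinuousLinearMap.proj (R := ℝ) (φ := fun _ : Fin 3 => ℝ) i).hasFDerivAt
  have h1 : HasFDerivAt (fun z : Fin 3 → ℝ => u (z 1, z 2)) _ z :=
    HasFDerivAt.comp z ((hu.differentiable one_ne_zero) (z 1, z 2)).hasFDerivAt
      ((h0 1).prodMk (h0 2))
  have h2 := ((h0 0).fun_smul h1).fderiv
  have h3 : fderiv ℝ (coneMap u) z = _ := h2
  have key : ∀ v, fderiv ℝ (coneMap u) z v =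
      z 0 • (v 1 • pderivX u (z 1, z 2) + v 2 • pderivY u (z 1, z 2)) + v 0 • u (z 1, z 2) := by
    intro v
    rw [h3]
    have : (v 1, v 2) = v 1 • ((1:ℝ), (0:ℝ)) + v 2 • ((0:ℝ), (1:ℝ)) := by simp
    have h4 : fderiv ℝ u (z 1, z 2) (v 1, v 2) =
        v 1 • pderivX u (z 1, z 2) + v 2 • pderivY u (z 1, z 2) := by
      rw [this, map_add, map_smul, map_smul]; rfl
    simp [h4]
  rw [ContinuousLinearMap.det, ← LinearMap.det_toMatrix', Matrix.det_fin_three, dot3_cross]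
  simp [LinearMap.toMatrix'_apply, key]
  ring

lemma deg_cone (u : ℝ × ℝ → Fin 3 → ℝ) (hu : ContDiff ℝ (⊤ : ℕ∞) u) (hc : HasCompactSupport u) :
    ∃ w : (Fin 3 → ℝ) → ℝ, Integrable w ∧ (∀ x, ∃ k : ℤ, w x = k) ∧
      ∀ f : (Fin 3 → ℝ) → ℝ, Measurable f → (∃ M, ∀ x, |f x| ≤ M) → ∫ x, w x * f x =
        ∫ z in Set.Ioc (0:ℝ) 1 ×ˢ (Set.univ : Set (ℝ × ℝ)), z.1 ^ 2 *
          dot3 (u z.2) (crossProduct (pderivX u z.2) (pderivY u z.2)) * f (z.1 • u z.2) := by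
  have hu1 : ContDiff ℝ 1 u := hu.of_le (by exact mod_cast le_top)
  have c0 := hu.continuous
  have c1 := (contDiff_px u hu).continuous
  have c2 := (contDiff_py u hu).continuous
  set T := Set.Ioc (0:ℝ) 1 ×ˢ (Set.univ : Set (ℝ × ℝ)) with hT
  have hTm : MeasurableSet T := measurableSet_Ioc.prod MeasurableSet.univ
  have iA := cont_int u hc (fun z => z.1 ^ 2 *
      dot3 (u z.2) (crossProduct (pderivX u z.2) (pderivY u z.2))) (by
      simp only [dot3_cross]; fun_prop) (by intro t p hp; simp [px_zero u p hp, dot3])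
  have hi : IntegrableOn (fun z => (fderiv ℝ (coneMap u) z).det) (eqv3 ⁻¹' T) := by
    have := (eqv3_mp.integrableOn_comp_preimage eqv3.measurableEmbedding).2 iA
    refine this.congr_fun ?_ (eqv3.measurable hTm)
    intro z _
    simp [coneMap_det u hu1, eqv3_apply]
  obtain ⟨w, h1, h2, h3⟩ := deg (coneMap u) (coneMap_contDiff u hu1) (eqv3 ⁻¹' T)
    (eqv3.measurable hTm) hi
  refine ⟨w, h1, h2, fun f hf hb => ?_⟩
  rw [h3 f hf hb, ← eqv3_mp.setIntegral_preimage_emb eqv3.measurableEmbedding]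
  simp [coneMap_det u hu1, eqv3_apply, coneMap]

lemma deg_total (u : ℝ × ℝ → Fin 3 → ℝ) :
    ∫ z in Set.Ioc (0:ℝ) 1 ×ˢ (Set.univ : Set (ℝ × ℝ)), z.1 ^ 2 *
          dot3 (u z.2) (crossProduct (pderivX u z.2) (pderivY u z.2)) =
      (1 / 3) * ∫ p, dot3 (u p) (crossProduct (pderivX u p) (pderivY u p)) := by
  rw [Measure.volume_eq_prod, ← Measure.prod_restrict, Measure.restrict_univ]
  rw [integral_prod_mul (fun t : ℝ => t ^ 2) (fun p => dot3 (u p) (crossProduct (pderivX u p) (pderivY u p)))]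
  rw [← intervalIntegral.integral_of_le zero_le_one]
  norm_num

/-- the (unnormalised) normal vector field -/
noncomputable def nrm (u : ℝ × ℝ → Fin 3 → ℝ) (p : ℝ × ℝ) : Fin 3 → ℝ :=
  crossProduct (pderivX u p) (pderivY u p)

lemma nrm_cont (u : ℝ × ℝ → Fin 3 → ℝ) (hu : ContDiff ℝ (⊤ : ℕ∞) u) : Continuous (nrm u) := by
  have c1 := (contDiff_px u hu).continuous
  have c2 := (contDiff_py u hu).continuous
  apply continuous_pi
  intro i
  unfold nrm
  fin_cases i <;> simp [cross_apply] <;> fun_prop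

lemma dot3_cs (a b : Fin 3 → ℝ) : |dot3 a b| ≤ √(dot3 a a) * √(dot3 b b) := by
  rw [← Real.sqrt_mul (dot3_self_nonneg a)]
  apply Real.abs_le_sqrt
  have := Finset.sum_mul_sq_le_sq_mul_sq Finset.univ a b
  simpa [dot3, pow_two] using this

open Convolution in
lemma moll (u : ℝ × ℝ → Fin 3 → ℝ) (hu : ContDiff ℝ (⊤ : ℕ∞) u) (hc : HasCompactSupport u)
    (w : (Fin 3 → ℝ) → ℝ) (hwi : Integrable w)
    (hw : ∀ f : (Fin 3 → ℝ) → ℝ, Measurable f → (∃ M, ∀ x, |f x| ≤ M) → ∫ x, w x * f x =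
        ∫ z in Set.Ioc (0:ℝ) 1 ×ˢ (Set.univ : Set (ℝ × ℝ)), z.1 ^ 2 *
          dot3 (u z.2) (crossProduct (pderivX u z.2) (pderivY u z.2)) * f (z.1 • u z.2))
    (φ : (Fin 3 → ℝ) → ℝ) (hφ : ContDiff ℝ 1 φ) (hφc : HasCompactSupport φ)
    (hφ0 : ∀ x, 0 ≤ φ x) (hφ1 : ∫ x, φ x = 1) :
    ENNReal.ofReal (3 * cball) * ∫⁻ t in Set.Ioi (0:ℝ),
      volume {x | t < |(φ ⋆[ContinuousLinearMap.lsmul ℝ ℝ, volume] w) x|} ^ ((2:ℝ)/3)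
      ≤ ENNReal.ofReal (∫ p, √(dot3 (nrm u p) (nrm u p))) := by
  have c0 := hu.continuous
  have cn := nrm_cont u hu
  have cnn : Continuous (fun p => √(dot3 (nrm u p) (nrm u p))) :=
    Real.continuous_sqrt.comp (continuous_dot3_self.comp cn)
  have csn : HasCompactSupport (fun p => √(dot3 (nrm u p) (nrm u p))) := by
    apply cs_of_zero u hc; intro p hp; simp [px_zero u p hp, dot3, nrm]
  have eW : (φ ⋆[ContinuousLinearMap.lsmul ℝ ℝ, volume] w) =
      (w ⋆[ContinuousLinearMap.mul ℝ ℝ, volume] φ) := by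
    ext x
    rw [convolution_eq_swap]
    simp [convolution, mul_comm]
  rw [eW]
  set W := (w ⋆[ContinuousLinearMap.mul ℝ ℝ, volume] φ) with hWdef
  have hWq : ∀ q, W q = ∫ p, w p * φ (q - p) := fun q => rfl
  have hWd : ContDiff ℝ 1 W := hφc.contDiff_convolution_right _ hwi.locallyIntegrable hφ
  have cdφ := hφ.continuous_fderiv one_ne_zero
  have hWf : ∀ q b, fderiv ℝ W q b = ∫ p, w p * fderiv ℝ φ (q - p) b := by
    intro q b
    rw [(hφc.hasFDerivAt_convolution_right _ hwi.locallyIntegrable hφ q).fderiv,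
      convolution_precompR_apply _ hwi.locallyIntegrable (hφc.fderiv ℝ) cdφ]
    rfl
  have bound_of : ∀ g : (Fin 3 → ℝ) → ℝ, Continuous g → HasCompactSupport g → ∃ M, ∀ x, |g x| ≤ M := by
    intro g hg hgc
    obtain ⟨C, hC⟩ := hg.bounded_above_of_compact_support hgc
    exact ⟨C, hC⟩
  obtain ⟨R, hR⟩ := c0.bounded_above_of_compact_support hc
  obtain ⟨r, hr⟩ := hφc.isBounded.subset_closedBall (0 : Fin 3 → ℝ)
  have hWc : HasCompactSupport W := by
    refine HasCompactSupport.intro (isCompact_closedBall (0 : Fin 3 → ℝ) (R + r)) ?_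
    intro q hq
    obtain ⟨M, hM⟩ := bound_of φ hφ.continuous hφc
    rw [hWq, hw (fun p => φ (q - p)) (hφ.continuous.measurable.comp (by fun_prop))
      ⟨M, fun x => hM _⟩]
    rw [setIntegral_eq_zero_of_forall_eq_zero]
    rintro ⟨t, p⟩ ⟨ht, _⟩
    have : φ (q - t • u p) = 0 := by
      apply image_eq_zero_of_notMem_tsupport
      intro hmem
      have h1 := hr hmem
      simp only [mem_closedBall_zero_iff, not_le] at hq h1
      have h2 : ‖t • u p‖ ≤ R := by
        rw [norm_smul]
        have h3 := hR p
        have h4 : ‖t‖ ≤ 1 := by rw [Real.norm_eq_abs, abs_of_pos ht.1]; exact ht.2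
        nlinarith [norm_nonneg (u p), norm_nonneg t]
      have h5 := norm_add_le (q - t • u p) (t • u p)
      rw [sub_add_cancel] at h5
      linarith
    simp [this]
  have hWf2 : ∀ q b, fderiv ℝ W q b = - ∫ p, φ (q - u p) * dot3 b (nrm u p) := by
    intro q b
    have cfb : Continuous (fun x => fderiv ℝ φ x b) := cdφ.clm_apply continuous_const
    obtain ⟨M, hM⟩ := bound_of (fun x => fderiv ℝ φ x b) cfb (hφc.fderiv_apply ℝ b)
    rw [hWf, hw (fun p => fderiv ℝ φ (q - p) b) (cfb.measurable.comp (by fun_prop)) ⟨M, fun x => hM _⟩]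
    have hst := stokes u hu hc (fun p => φ (q - p)) (hφ.comp (by fun_prop)) b
    have hfd : ∀ p, fderiv ℝ (fun p => φ (q - p)) p b = - fderiv ℝ φ (q - p) b := by
      intro p
      have h1 : HasFDerivAt (fun p => φ (q - p)) ((fderiv ℝ φ (q - p)).comp
          (- ContinuousLinearMap.id ℝ (Fin 3 → ℝ))) p :=
        HasFDerivAt.comp p (hφ.differentiable one_ne_zero _).hasFDerivAt ((hasFDerivAt_id p).const_sub q)
      rw [h1.fderiv]; simp
    simp only [hfd, mul_neg, integral_neg] at hst
    unfold nrm
    rw [← hst, neg_neg]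
  have hintg : ∀ q, Integrable (fun p => φ (q - u p) * √(dot3 (nrm u p) (nrm u p))) := by
    intro q
    apply Continuous.integrable_of_hasCompactSupport
    · exact (hφ.continuous.comp (by fun_prop)).mul cnn
    · exact csn.mul_left
  set G : (Fin 3 → ℝ) → ℝ := fun q => ∫ p, φ (q - u p) * √(dot3 (nrm u p) (nrm u p)) with hGdef
  have cj : Continuous (fun z : (Fin 3 → ℝ) × (ℝ × ℝ) =>
      φ (z.1 - u z.2) * √(dot3 (nrm u z.2) (nrm u z.2))) :=
    (hφ.continuous.comp (by fun_prop)).mul (cnn.comp continuous_snd)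
  have hGm : Measurable G := by
    have := cj.stronglyMeasurable.integral_prod_right' (ν := (volume : Measure (ℝ × ℝ)))
    exact this.measurable
  have hp0 : ∀ q p, 0 ≤ φ (q - u p) * √(dot3 (nrm u p) (nrm u p)) := fun q p =>
    mul_nonneg (hφ0 _) (Real.sqrt_nonneg _)
  have hG0 : ∀ q, 0 ≤ G q := fun q => integral_nonneg (hp0 q)
  have hWG : ∀ q b, |fderiv ℝ W q b| ≤ G q * √(dot3 b b) := by
    intro q b
    rw [hWf2, abs_neg, hGdef]
    simp only
    rw [← integral_mul_const]
    refine (abs_integral_le_integral_abs).trans ?_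
    apply integral_mono_of_nonneg
    · exact Eventually.of_forall fun _ => abs_nonneg _
    · exact (hintg q).mul_const _
    · refine Eventually.of_forall fun p => ?_
      simp only
      rw [abs_mul, abs_of_nonneg (hφ0 _), mul_assoc]
      refine mul_le_mul_of_nonneg_left ?_ (hφ0 _)
      rw [mul_comm]
      exact dot3_cs _ _
  refine (sob W hWd hWc G hGm hG0 hWG).trans ?_
  have e1 : ∀ q, ENNReal.ofReal (G q) = ∫⁻ p, ENNReal.ofReal (φ (q - u p) * √(dot3 (nrm u p) (nrm u p))) :=
    fun q => ofReal_integral_eq_lintegral_ofReal (hintg q) (Eventually.of_forall (hp0 q))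
  simp only [e1]
  rw [lintegral_lintegral_swap (f := fun q p => ENNReal.ofReal (φ (q - u p) * √(dot3 (nrm u p) (nrm u p))))
    (ENNReal.measurable_ofReal.comp cj.measurable).aemeasurable]
  have e2 : ∀ p, ∫⁻ q, ENNReal.ofReal (φ (q - u p) * √(dot3 (nrm u p) (nrm u p)))
      = ENNReal.ofReal (√(dot3 (nrm u p) (nrm u p))) := by
    intro p
    simp only [ENNReal.ofReal_mul (hφ0 _)]
    have hm : Measurable (fun q => ENNReal.ofReal (φ (q - u p))) :=
      ENNReal.measurable_ofReal.comp (hφ.continuous.measurable.comp (by fun_prop))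
    rw [lintegral_mul_const _ hm,
      lintegral_sub_right_eq_self (fun q => ENNReal.ofReal (φ q)) (u p),
      ← ofReal_integral_eq_lintegral_ofReal (hφ.continuous.integrable_of_hasCompactSupport hφc)
        (Eventually.of_forall hφ0), hφ1]
    simp
  simp only [e2]
  rw [ofReal_integral_eq_lintegral_ofReal (cnn.integrable_of_hasCompactSupport csn)
    (Eventually.of_forall fun _ => Real.sqrt_nonneg _)]

lemma vol_liminf {α : Type*} [MeasurableSpace α] (μ : Measure α) (S : ℕ → Set α) (T : Set α)
    (h : ∀ᵐ x ∂μ, x ∈ T → ∀ᶠ n in atTop, x ∈ S n) : μ T ≤ liminf (fun n => μ (S n)) atTop := by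
  have h1 : μ T ≤ μ (⋃ N : ℕ, ⋂ n ≥ N, S n) := by
    apply measure_mono_ae
    filter_upwards [h] with x hx hT
    obtain ⟨N, hN⟩ := eventually_atTop.1 (hx hT)
    exact Set.mem_iUnion.2 ⟨N, Set.mem_iInter₂.2 hN⟩
  refine h1.trans ?_
  rw [Directed.measure_iUnion, liminf_eq_iSup_iInf_of_nat]
  · refine iSup_mono fun N => le_iInf₂ fun n hn => measure_mono ?_
    exact Set.iInter₂_subset n hn
  · apply Monotone.directed_le
    intro a b hab x hx
    simp only [Set.mem_iInter] at hx ⊢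
    exact fun n hn => hx n (le_trans hab hn)

open Convolution in
lemma level_bound (u : ℝ × ℝ → Fin 3 → ℝ) (hu : ContDiff ℝ (⊤ : ℕ∞) u) (hc : HasCompactSupport u)
    (w : (Fin 3 → ℝ) → ℝ) (hwi : Integrable w)
    (hw : ∀ f : (Fin 3 → ℝ) → ℝ, Measurable f → (∃ M, ∀ x, |f x| ≤ M) → ∫ x, w x * f x =
        ∫ z in Set.Ioc (0:ℝ) 1 ×ˢ (Set.univ : Set (ℝ × ℝ)), z.1 ^ 2 *
          dot3 (u z.2) (crossProduct (pderivX u z.2) (pderivY u z.2)) * f (z.1 • u z.2)) :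
    ∫⁻ t in Set.Ioi (0:ℝ), volume {x | t < |w x|} ^ ((2:ℝ)/3)
      ≤ ENNReal.ofReal ((∫ p, √(dot3 (nrm u p) (nrm u p))) / (3 * cball)) := by
  have hc3 : 0 < 3 * cball := by have := cball_pos; positivity
  let φ : ℕ → ContDiffBump (0 : Fin 3 → ℝ) := fun n =>
    ⟨1 / ((n:ℝ) + 1), 2 * (1 / ((n:ℝ) + 1)), by positivity, by
      have : 0 < 1 / ((n:ℝ) + 1) := by positivity
      linarith⟩
  have hlim : Tendsto (fun n => (φ n).rOut) atTop (𝓝 0) := by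
    have := (tendsto_one_div_add_atTop_nhds_zero_nat (𝕜 := ℝ)).const_mul 2
    simpa [φ] using this
  set W : ℕ → (Fin 3 → ℝ) → ℝ := fun n =>
    ((φ n).normed volume ⋆[ContinuousLinearMap.lsmul ℝ ℝ, volume] w) with hW
  have hae : ∀ᵐ x, Tendsto (fun n => W n x) atTop (𝓝 (w x)) :=
    ContDiffBump.ae_convolution_tendsto_right_of_locallyIntegrable hlim (K := 2)
      (Eventually.of_forall fun n => le_rfl) hwi.locallyIntegrable
  have hn : ∀ n, ∫⁻ t in Set.Ioi (0:ℝ), volume {x | t < |W n x|} ^ ((2:ℝ)/3)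
      ≤ ENNReal.ofReal ((∫ p, √(dot3 (nrm u p) (nrm u p))) / (3 * cball)) := by
    intro n
    have := moll u hu hc w hwi hw ((φ n).normed volume) ((φ n).contDiff_normed)
      (φ n).hasCompactSupport_normed (fun x => (φ n).nonneg_normed x) ((φ n).integral_normed)
    rw [ENNReal.ofReal_div_of_pos hc3, ENNReal.le_div_iff_mul_le
      (Or.inl (by simpa using cball_pos)) (Or.inl ENNReal.ofReal_ne_top), mul_comm]
    exact this
  have hmono : ∀ n, Antitone (fun t : ℝ => volume {x | t < |W n x|} ^ ((2:ℝ)/3)) := by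
    intro n s t hst
    refine ENNReal.rpow_le_rpow (measure_mono fun x hx => ?_) (by norm_num)
    exact lt_of_le_of_lt hst hx
  calc ∫⁻ t in Set.Ioi (0:ℝ), volume {x | t < |w x|} ^ ((2:ℝ)/3)
      ≤ ∫⁻ t in Set.Ioi (0:ℝ), liminf (fun n => volume {x | t < |W n x|} ^ ((2:ℝ)/3)) atTop := by
        refine lintegral_mono fun t => ?_
        have h1 : volume {x | t < |w x|} ≤ liminf (fun n => volume {x | t < |W n x|}) atTop := by
          apply vol_liminf
          filter_upwards [hae] with x hx hT
          exact hx.abs.eventually_const_lt hT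
        have h2 := ENNReal.rpow_le_rpow h1 (by norm_num : (0:ℝ) ≤ 2/3)
        refine h2.trans (le_of_eq ?_)
        exact (ENNReal.monotone_rpow_of_nonneg (by norm_num : (0:ℝ) ≤ 2/3)).map_liminf_of_continuousAt
          _ ENNReal.continuous_rpow_const.continuousAt
    _ ≤ liminf (fun n => ∫⁻ t in Set.Ioi (0:ℝ), volume {x | t < |W n x|} ^ ((2:ℝ)/3)) atTop :=
        lintegral_liminf_le fun n => (hmono n).measurable
    _ ≤ _ := by
        refine liminf_le_of_frequently_le' ?_
        exact (Eventually.of_forall hn).frequently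

lemma int_bound (w : (Fin 3 → ℝ) → ℝ) (hwi : Integrable w) (hz : ∀ x, ∃ k : ℤ, w x = k)
    (K : ℝ) (hK : 0 ≤ K)
    (h : ∫⁻ t in Set.Ioi (0:ℝ), volume {x | t < |w x|} ^ ((2:ℝ)/3) ≤ ENNReal.ofReal K) :
    (∫ x, w x) ^ 2 ≤ K ^ 3 := by
  set I := ∫⁻ t in Set.Ioi (0:ℝ), volume {x | t < |w x|} ^ ((2:ℝ)/3) with hI
  set m0 := volume {x | (0:ℝ) < |w x|} with hm0
  have hlt : ∀ t ∈ Set.Ioo (0:ℝ) 1, volume {x | t < |w x|} = m0 := by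
    intro t ht
    congr 1
    ext x
    simp only [Set.mem_setOf_eq]
    refine ⟨fun hx => ht.1.trans hx, fun hx => ?_⟩
    obtain ⟨k, hk⟩ := hz x
    rw [hk] at hx ⊢
    have : (1:ℝ) ≤ |(k:ℝ)| := by
      have h2 : k ≠ 0 := by rintro rfl; simp at hx
      exact_mod_cast Int.one_le_abs h2
    linarith [ht.2]
  have h1 : m0 ^ ((2:ℝ)/3) ≤ I := by
    calc m0 ^ ((2:ℝ)/3) = ∫⁻ t in Set.Ioo (0:ℝ) 1, m0 ^ ((2:ℝ)/3) := by simp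
      _ = ∫⁻ t in Set.Ioo (0:ℝ) 1, volume {x | t < |w x|} ^ ((2:ℝ)/3) :=
        setLIntegral_congr_fun measurableSet_Ioo fun t ht => by simp only [hlt t ht]
      _ ≤ I := lintegral_mono_set Set.Ioo_subset_Ioi_self
  have hm3 : m0 ^ ((1:ℝ)/3) ≤ I ^ ((1:ℝ)/2) := by
    have := ENNReal.rpow_le_rpow h1 (by norm_num : (0:ℝ) ≤ 1/2)
    rw [← ENNReal.rpow_mul] at this
    norm_num at this ⊢
    exact this
  have hmono : Antitone (fun t : ℝ => volume {x | t < |w x|}) := by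
    intro s t hst
    exact measure_mono fun x hx => lt_of_le_of_lt hst hx
  have hmono' : Antitone (fun t : ℝ => volume {x | t < |w x|} ^ ((2:ℝ)/3)) := by
    intro s t hst
    exact ENNReal.rpow_le_rpow (hmono hst) (by norm_num)
  have h2 : ∫⁻ x, ENNReal.ofReal |w x| ≤ m0 ^ ((1:ℝ)/3) * I := by
    rw [lintegral_eq_lintegral_meas_lt volume (Eventually.of_forall fun x => abs_nonneg _)
      hwi.abs.aemeasurable, ← lintegral_const_mul _ hmono'.measurable]
    refine setLIntegral_mono' measurableSet_Ioi fun t ht => ?_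
    have e : volume {x | t < |w x|} = volume {x | t < |w x|} ^ ((1:ℝ)/3) * volume {x | t < |w x|} ^ ((2:ℝ)/3) := by
      rw [← ENNReal.rpow_add_of_nonneg _ _ (by norm_num) (by norm_num)]; norm_num
    have e' : volume {x | t < |w x|} ^ ((1:ℝ)/3) ≤ m0 ^ ((1:ℝ)/3) :=
      ENNReal.rpow_le_rpow (hmono (le_of_lt ht)) (by norm_num)
    refine e.le.trans ?_
    gcongr
  have h3 : ENNReal.ofReal |∫ x, w x| ≤ ENNReal.ofReal (K ^ ((3:ℝ)/2)) := by
    calc ENNReal.ofReal |∫ x, w x| ≤ ENNReal.ofReal (∫ x, |w x|) :=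
          ENNReal.ofReal_le_ofReal abs_integral_le_integral_abs
      _ = ∫⁻ x, ENNReal.ofReal |w x| := ofReal_integral_eq_lintegral_ofReal hwi.abs
          (Eventually.of_forall fun x => abs_nonneg _)
      _ ≤ I ^ ((1:ℝ)/2) * I := h2.trans (by gcongr)
      _ ≤ ENNReal.ofReal K ^ ((1:ℝ)/2) * ENNReal.ofReal K := by gcongr
      _ = ENNReal.ofReal K ^ ((3:ℝ)/2) := by
          conv_lhs => rw [← ENNReal.rpow_one (ENNReal.ofReal K), ← ENNReal.rpow_mul]
          rw [← ENNReal.rpow_add_of_nonneg _ _ (by norm_num) (by norm_num)]; norm_num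
      _ = _ := ENNReal.ofReal_rpow_of_nonneg hK (by norm_num)
  have h4 : |∫ x, w x| ≤ K ^ ((3:ℝ)/2) := (ENNReal.ofReal_le_ofReal_iff (by positivity)).1 h3
  have h5 : (K ^ ((3:ℝ)/2)) ^ 2 = K ^ 3 := by
    rw [← Real.rpow_natCast, ← Real.rpow_mul hK, ← Real.rpow_natCast]; norm_num
  rw [← h5, ← sq_abs]
  exact pow_le_pow_left₀ (abs_nonneg _) h4 2

lemma isoper (u : ℝ × ℝ → Fin 3 → ℝ) (hu : ContDiff ℝ (⊤ : ℕ∞) u) (hc : HasCompactSupport u) :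
    4 * π * (∫ p, dot3 (u p) (crossProduct (pderivX u p) (pderivY u p))) ^ 2 ≤
      (∫ p, √(dot3 (nrm u p) (nrm u p))) ^ 3 := by
  obtain ⟨w, hwi, hz, hw⟩ := deg_cone u hu hc
  have hA : 0 ≤ ∫ p, √(dot3 (nrm u p) (nrm u p)) := integral_nonneg fun _ => Real.sqrt_nonneg _
  have h := int_bound w hwi hz _ (div_nonneg hA (by have := cball_pos; positivity))
    (level_bound u hu hc w hwi hw)
  have h1 := hw (fun _ => 1) measurable_const ⟨1, by simp⟩
  simp only [mul_one] at h1
  rw [deg_total] at h1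
  rw [h1, div_pow, mul_pow 3 cball, cball_pow, le_div_iff₀ (by positivity)] at h
  linarith

lemma area_le (a b : Fin 3 → ℝ) :
    √(dot3 (crossProduct a b) (crossProduct a b)) ≤ (1/2) * (dot3 a a + dot3 b b) := by
  have ha := dot3_self_nonneg a
  have hb := dot3_self_nonneg b
  apply Real.sqrt_le_iff.2 ⟨by positivity, ?_⟩
  simp only [dot3, cross_apply, Fin.sum_univ_three]
  simp
  nlinarith [sq_nonneg (a 0 * b 0 + a 1 * b 1 + a 2 * b 2), sq_nonneg (a 0^2+a 1^2+a 2^2 - b 0^2-b 1^2-b 2^2)]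

lemma isoper' (u : ℝ × ℝ → Fin 3 → ℝ) (hu : ContDiff ℝ (⊤ : ℕ∞) u) (hc : HasCompactSupport u) :
    32 * π * (∫ p, dot3 (u p) (crossProduct (pderivX u p) (pderivY u p))) ^ 2 ≤
      (∫ p, (dot3 (pderivX u p) (pderivX u p) + dot3 (pderivY u p) (pderivY u p))) ^ 3 := by
  have h := isoper u hu hc
  have c1 := (contDiff_px u hu).continuous
  have c2 := (contDiff_py u hu).continuous
  have hA : 0 ≤ ∫ p, √(dot3 (nrm u p) (nrm u p)) := integral_nonneg fun _ => Real.sqrt_nonneg _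
  have h2 : ∫ p, √(dot3 (nrm u p) (nrm u p)) ≤
      (1/2) * ∫ p, (dot3 (pderivX u p) (pderivX u p) + dot3 (pderivY u p) (pderivY u p)) := by
    rw [← integral_const_mul]
    apply integral_mono_of_nonneg
    · exact Eventually.of_forall fun _ => Real.sqrt_nonneg _
    · apply Integrable.const_mul
      apply Continuous.integrable_of_hasCompactSupport
      · exact (continuous_dot3_self.comp c1).add (continuous_dot3_self.comp c2)
      · apply cs_of_zero u hc; intro p hp; simp [px_zero u p hp, dot3]
    · exact Eventually.of_forall fun p => area_le _ _
  have h3 := pow_le_pow_left₀ hA h2 3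
  rw [mul_pow] at h3
  linarith

end Aux

/-- Every admissible `u` with `D(u) = 0` and `‖u‖ ≠ 0` satisfies
`E(u) ≥ 4π/(3H²)`: explicit lower bound for the potential-well depth `d`. -/
theorem depth_explicit_lower_bound (Ω : Set (ℝ × ℝ)) (hΩ : IsOpen Ω)
    (hΩb : Bornology.IsBounded Ω) (H : ℝ) (hH : 0 < H)
    (u : ℝ × ℝ → Fin 3 → ℝ) (hu : IsAdmissible Ω u)
    (hD : Dfun Ω H 1 u = 0) (hne : dnorm Ω u ≠ 0) :
    4 * Real.pi / (3 * H ^ 2) ≤ Efun Ω H u := by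
  obtain ⟨hs, hc, hsub⟩ := hu
  have hV : vol Ω u = ∫ p, dot3 (u p) (crossProduct (pderivX u p) (pderivY u p)) := by
    apply setIntegral_eq_integral_of_forall_compl_eq_zero
    intro p hp
    simp [px_zero u p (fun h => hp (hsub h)), dot3]
  have hA : dirEnergy Ω u =
      ∫ p, (dot3 (pderivX u p) (pderivX u p) + dot3 (pderivY u p) (pderivY u p)) := by
    apply setIntegral_eq_integral_of_forall_compl_eq_zero
    intro p hp
    simp [px_zero u p (fun h => hp (hsub h)), dot3]
  have h := isoper' u hs hc
  rw [← hV, ← hA] at h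
  have hA0 : 0 ≤ dirEnergy Ω u := by
    rw [hA]
    exact integral_nonneg fun p => add_nonneg (dot3_self_nonneg _) (dot3_self_nonneg _)
  have hA1 : 0 < dirEnergy Ω u := by
    rcases hA0.lt_or_eq with h0 | h0
    · exact h0
    · exact absurd (by rw [dnorm, ← h0, Real.sqrt_zero]) hne
  unfold Dfun at hD
  unfold Efun
  generalize dirEnergy Ω u = A at *
  generalize vol Ω u = V at *
  have hAV : A = -(2 * H * V) := by linarith
  have hE : (1 / 2) * A + (2 * H / 3) * V = A / 6 := by linarith
  rw [hE, div_le_iff₀ (by positivity)]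
  have h2 : 8 * Real.pi * A ^ 2 ≤ (A * H ^ 2) * A ^ 2 := by
    have e1 : A ^ 2 = 4 * H ^ 2 * V ^ 2 := by rw [hAV]; ring
    have h3 := mul_le_mul_of_nonneg_left h (sq_nonneg H)
    have e2 : 8 * Real.pi * A ^ 2 = H ^ 2 * (32 * Real.pi * V ^ 2) := by rw [e1]; ring
    have e3 : (A * H ^ 2) * A ^ 2 = H ^ 2 * A ^ 3 := by ring
    rw [e2, e3]; exact h3
  have h4 : 8 * Real.pi ≤ A * H ^ 2 := le_of_mul_le_mul_right h2 (by positivity)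
  linarith
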